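/- arXiv:1805.03552 — 2 statements merged into one kernel-verified Lean document; each statement's English description precedes it below -/
import Mathlib

section
/- Let G ↷ Y be a p.m.p. action of a countable group, and let q0 : X0 → Y and q1 : X1 → Y be extensions of G-actions with q1 relatively weakly mixing. Let L be a Polish group admitting a bi-invariant metric, let w0 : G × X0 → L and w1 : G × X1 → L be measurable cocycles, and suppose F : X0 ⊗_Y X1 → L is measurable with w0(g, x0) = F(gx0, gx1) w1(g, x1) F(x0, x1)^{-1} for all g and a.e. (x0, x1). Then there exist measurable φ0 : X0 → L, φ1 : X1 → L and a measurable cocycle w : G × Y → L such that F(x0,x1) = φ0(x0)^{-1} φ1(x1), w(g, q0(x0)) = φ0(gx0) w0(g,x0) φ0(x0)^{-1}, and w(g, q1(x1)) = φ1(gx1) w1(g,x1) φ1(x1)^{-1} almost everywhere. -/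
open MeasureTheory ProbabilityTheory
open scoped ENNReal

/-- `w : G × X → L` is a measurable cocycle for the action `act` of `G` on `X`. -/
def IsCocycle {G X L : Type*} [Group G] [Group L] [MeasurableSpace X] [MeasurableSpace L]
    (μ : Measure X) (act : G → X → X) (w : G → X → L) : Prop :=
  (∀ g : G, Measurable (w g)) ∧
    ∀ g h : G, ∀ᵐ x ∂μ, w (g * h) x = w g (act h x) * w h x

/-!
On the fibre of `X₀ ⊗_Y X₁` over `y`, compare the values of `F` at two points `x₀, x₀'` through
the ratio `F(x₀', x₁) F(x₀, x₁)⁻¹`. By the cohomology equation the group acts on this ratio by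
left and right multiplication with elements that do not depend on `x₁`. Since the metric of `L`
is bi-invariant, the distance in measure between the ratios seen from `x₁` and from `x₁'` is
therefore an invariant function on `X₁ ⊗_Y X₁`, and by relative weak mixing it depends only on
`y`. Separability of the space of measurable functions of `(x₀, x₀')` makes this distance smaller
than any `r > 0` on a set of positive measure in each fibre, so it vanishes: the ratio does not
depend on `x₁`. Evaluating it at measurably chosen base points of the fibres splits `F` as `φ₀⁻¹
φ₁`. The twists of `w₀` by `φ₀` and of `w₁` by `φ₁` then agree on the joining, which is
relatively independent, so both come from `Y`.
-/

open scoped BoundedContinuousFunction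

section Kernels

variable {α β γ δ : Type*} [MeasurableSpace α] [MeasurableSpace β] [MeasurableSpace γ]
  [MeasurableSpace δ]

lemma measurableSet_setOf_ae_kernel (κ : Kernel α β) [IsSFiniteKernel κ] {p : α → β → Prop}
    (hp : MeasurableSet {x : α × β | p x.1 x.2}) : MeasurableSet {a | ∀ᵐ b ∂κ a, p a b} :=
  Kernel.measurable_kernel_prodMk_left hp.compl (measurableSet_singleton 0)

lemma exists_measurable_ae_of_ae_ae_kernel [StandardBorelSpace β] [Nonempty β]
    {μ : Measure α} [SFinite μ] {κ : Kernel α β} [IsMarkovKernel κ] {p : α → β → Prop}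
    (hp : MeasurableSet {x : α × β | p x.1 x.2}) (h : ∀ᵐ a ∂μ, ∀ᵐ b ∂κ a, p a b) :
    ∃ s : α → β, Measurable s ∧ ∀ᵐ a ∂μ, p a (s a) := by
  -- Realising `κ a` as the law of `f a t` with `t` uniform, almost every fixed parameter `t` gives
  -- such a section.
  obtain ⟨f, hf, hfκ⟩ := κ.exists_measurable_map_eq_unitInterval
  have h_unif : ∀ᵐ a ∂μ, ∀ᵐ t ∂(volume : Measure unitInterval), p a (f a t) := by
    filter_upwards [h] with a ha
    rw [← hfκ a] at ha
    exact ae_of_ae_map hf.of_uncurry_left.aemeasurable ha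
  have hm : MeasurableSet {x : α × unitInterval | p x.1 (f x.1 x.2)} :=
    (measurable_fst.prodMk hf) hp
  obtain ⟨t, ht⟩ := ((Measure.ae_ae_comm hm).1 h_unif).exists
  exact ⟨fun a => f a t, hf.of_uncurry_right, ht⟩

lemma exists_measurable_ae_ae_of_ae_ae_ae_kernel [StandardBorelSpace β] [Nonempty β]
    {μ : Measure α} [SFinite μ] {κ : Kernel α β} [IsMarkovKernel κ]
    {η : Kernel α γ} [IsSFiniteKernel η] {p : β → γ → Prop}
    (hp : MeasurableSet {x : β × γ | p x.1 x.2})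
    (h : ∀ᵐ a ∂μ, ∀ᵐ b ∂κ a, ∀ᵐ c ∂η a, p b c) :
    ∃ s : α → β, Measurable s ∧ ∀ᵐ a ∂μ, ∀ᵐ c ∂η a, p (s a) c := by
  refine exists_measurable_ae_of_ae_ae_kernel (p := fun a b => ∀ᵐ c ∂η a, p b c) ?_ h
  have hm : Measurable fun x : (α × β) × γ => (x.1.2, x.2) := by fun_prop
  exact measurableSet_setOf_ae_kernel (η.comap Prod.fst measurable_fst)
    (p := fun x c => p x.2 c) (hm hp)

lemma measurePreserving_prodProdProdComm (μ : Measure α) (ν : Measure β) (ρ : Measure γ)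
    (τ : Measure δ) [SFinite μ] [SFinite ν] [SFinite ρ] [SFinite τ] :
    MeasurePreserving (Equiv.prodProdProdComm α β γ δ) ((μ.prod ν).prod (ρ.prod τ))
      ((μ.prod ρ).prod (ν.prod τ)) := by
  have hm : Measurable (Equiv.prodProdProdComm α β γ δ) := by
    change Measurable fun x : (α × β) × γ × δ => ((x.1.1, x.2.1), (x.1.2, x.2.2))
    fun_prop
  refine ⟨hm, Measure.ext_of_lintegral _ fun f hf => ?_⟩
  have hf' : Measurable fun x : (α × β) × γ × δ => f ((x.1.1, x.2.1), (x.1.2, x.2.2)) := by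
    fun_prop
  rw [lintegral_map hf hm]
  simp only [Equiv.prodProdProdComm_apply]
  rw [lintegral_prod _ hf'.aemeasurable, lintegral_prod _ (by fun_prop),
    lintegral_prod _ hf.aemeasurable, lintegral_prod _ (by fun_prop)]
  refine lintegral_congr fun a => ?_
  calc ∫⁻ b, ∫⁻ z, f ((a, z.1), (b, z.2)) ∂ρ.prod τ ∂ν
      = ∫⁻ b, ∫⁻ c, ∫⁻ d, f ((a, c), (b, d)) ∂τ ∂ρ ∂ν :=
        lintegral_congr fun b => lintegral_prod (fun z => f ((a, z.1), (b, z.2))) (by fun_prop)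
    _ = ∫⁻ c, ∫⁻ b, ∫⁻ d, f ((a, c), (b, d)) ∂τ ∂ν ∂ρ :=
        lintegral_lintegral_swap (f := fun b c => ∫⁻ d, f ((a, c), (b, d)) ∂τ) (by fun_prop)
    _ = ∫⁻ c, ∫⁻ z, f ((a, c), z) ∂ν.prod τ ∂ρ :=
        lintegral_congr fun c => (lintegral_prod (fun z => f ((a, c), z)) (by fun_prop)).symm

lemma ae_ae_prod_of_ae_ae_prod {μ : Measure α} {ν : Measure β} [SFinite μ] [SFinite ν]
    {p : α → α → β → β → Prop}
    (hp : MeasurableSet {x : (α × α) × β × β | p x.1.1 x.1.2 x.2.1 x.2.2})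
    (h : ∀ᵐ x ∂μ.prod μ, ∀ᵐ y ∂ν.prod ν, p x.1 x.2 y.1 y.2) :
    ∀ᵐ s ∂μ.prod ν, ∀ᵐ t ∂μ.prod ν, p s.1 t.1 s.2 t.2 :=
  Measure.ae_ae_of_ae_prod <| (measurePreserving_prodProdProdComm μ ν μ ν).quasiMeasurePreserving.ae
    ((Measure.ae_prod_iff_ae_ae hp).2 h)

end Kernels

section ConvergenceInMeasure

variable {X Z L : Type*} [MeasurableSpace X] [MeasurableSpace Z]

lemma measure_prod_self_edist_lt_ne_zero {E : Type*} [PseudoEMetricSpace E]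
    [TopologicalSpace.SeparableSpace E] (μ : Measure X) [SFinite μ] [NeZero μ] (f : X → E)
    {r : ℝ≥0∞} (hr : 0 < r) : (μ.prod μ) {p | edist (f p.1) (f p.2) < r} ≠ 0 := by
  -- One of countably many balls of radius `r / 2` has a non-null preimage, whose square consists
  -- of such pairs.
  obtain ⟨x₀, -⟩ := nonempty_of_measure_ne_zero (NeZero.ne (μ Set.univ))
  have : Nonempty E := ⟨f x₀⟩
  set c := TopologicalSpace.denseSeq E
  obtain ⟨n, hn⟩ : ∃ n, μ {x | edist (f x) (c n) < r / 2} ≠ 0 := by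
    by_contra! h_null
    have h_cover : ⋃ n, {x | edist (f x) (c n) < r / 2} = Set.univ := by
      refine Set.eq_univ_of_forall fun x => Set.mem_iUnion.2 ?_
      obtain ⟨_, ⟨n, rfl⟩, hn⟩ := EMetric.mem_closure_iff.1
        (TopologicalSpace.denseRange_denseSeq E (f x)) _ (ENNReal.half_pos hr.ne')
      exact ⟨n, hn⟩
    exact NeZero.ne (μ Set.univ) (h_cover ▸ measure_iUnion_null h_null)
  have h_sub : {x | edist (f x) (c n) < r / 2} ×ˢ {x | edist (f x) (c n) < r / 2} ⊆
      {p | edist (f p.1) (f p.2) < r} := fun p hp =>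
    calc edist (f p.1) (f p.2) ≤ edist (f p.1) (c n) + edist (f p.2) (c n) :=
          edist_triangle_right _ _ _
      _ < r / 2 + r / 2 := ENNReal.add_lt_add hp.1 hp.2
      _ = r := ENNReal.add_halves r
  intro h_null
  have h_sq := measure_mono_null h_sub h_null
  rw [Measure.prod_prod] at h_sq
  exact hn (mul_self_eq_zero.1 h_sq)

lemma measure_prod_self_lintegral_edist_lt_ne_zero {E : Type*} [NormedAddCommGroup E]
    [TopologicalSpace.SeparableSpace E] [MeasurableSpace.CountablyGenerated Z] {η : Measure Z}
    [SFinite η] (μ : Measure X) [SFinite μ] [NeZero μ] {f : X → Z → E}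
    (hf : ∀ x, MemLp (f x) 1 η) {r : ℝ≥0∞} (hr : 0 < r) :
    (μ.prod μ) {p | ∫⁻ z, edist (f p.1 z) (f p.2 z) ∂η < r} ≠ 0 := by
  have : Fact ((1 : ℝ≥0∞) ≠ ∞) := ⟨ENNReal.one_ne_top⟩
  simpa only [Lp.edist_toLp_toLp, eLpNorm_one_eq_lintegral_enorm, Pi.sub_apply,
    ← edist_eq_enorm_sub] using measure_prod_self_edist_lt_ne_zero μ (fun x => (hf x).toLp) hr

/-- The Fréchet embedding `a ↦ min 1 (dist a ·)` of the bounded metric `min 1 dist`. It puts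
`L`-valued functions inside an `L¹` space of Banach-valued functions, which is separable. -/
noncomputable def truncDistEmbedding [PseudoMetricSpace L] (a : L) : L →ᵇ ℝ :=
  BoundedContinuousFunction.ofNormedAddCommGroup (fun b => min 1 (dist a b)) (by fun_prop) 1
    fun b => by
      rw [Real.norm_of_nonneg (le_min zero_le_one dist_nonneg)]
      exact min_le_left _ _

lemma norm_truncDistEmbedding_le [PseudoMetricSpace L] (a : L) : ‖truncDistEmbedding a‖ ≤ 1 :=
  BoundedContinuousFunction.norm_ofNormedAddCommGroup_le _ zero_le_one _

lemma dist_truncDistEmbedding [PseudoMetricSpace L] (a b : L) :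
    dist (truncDistEmbedding a) (truncDistEmbedding b) = min 1 (dist a b) := by
  refine le_antisymm ?_ ?_
  · refine (BoundedContinuousFunction.dist_le (le_min zero_le_one dist_nonneg)).2 fun c => ?_
    change |min 1 (dist a c) - min 1 (dist b c)| ≤ min 1 (dist a b)
    have h_tri := abs_dist_sub_le a b c
    grind [dist_nonneg (x := a) (y := c), dist_nonneg (x := b) (y := c)]
  · have h_eval := (truncDistEmbedding a).dist_coe_le_dist (g := truncDistEmbedding b) b
    change |min 1 (dist a b) - min 1 (dist b b)| ≤ _ at h_eval
    rw [dist_self, min_eq_right zero_le_one, sub_zero] at h_eval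
    exact (le_abs_self _).trans h_eval

lemma edist_truncDistEmbedding [PseudoMetricSpace L] (a b : L) :
    edist (truncDistEmbedding a) (truncDistEmbedding b) = min 1 (edist a b) := by
  rw [edist_dist, dist_truncDistEmbedding, ENNReal.ofReal_min, ENNReal.ofReal_one, edist_dist]

lemma continuous_truncDistEmbedding [PseudoMetricSpace L] :
    Continuous (truncDistEmbedding : L → L →ᵇ ℝ) :=
  (LipschitzWith.of_edist_le fun a b =>
    (edist_truncDistEmbedding a b).trans_le (min_le_right _ _)).continuous

/-- A pseudometric for convergence in `η`-measure; truncating at `1` makes it finite for finite `η`,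
whatever the functions. -/
noncomputable def lintegralTruncEdist [PseudoEMetricSpace L] (η : Measure Z) (f g : Z → L) :
    ℝ≥0∞ :=
  ∫⁻ z, min 1 (edist (f z) (g z)) ∂η

lemma measure_prod_self_lintegralTruncEdist_lt_ne_zero [PseudoMetricSpace L]
    [TopologicalSpace.SeparableSpace L] [MeasurableSpace.CountablyGenerated Z]
    (η : Measure Z) [IsFiniteMeasure η] (μ : Measure X) [SFinite μ] [NeZero μ] {f : X → Z → L}
    (hf : ∀ x, AEStronglyMeasurable (f x) η) {r : ℝ≥0∞} (hr : 0 < r) :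
    (μ.prod μ) {p | lintegralTruncEdist η (f p.1) (f p.2) < r} ≠ 0 := by
  let E := Submodule.span ℝ (Set.range (truncDistEmbedding (L := L)))
  have : TopologicalSpace.SeparableSpace E :=
    (TopologicalSpace.isSeparable_range continuous_truncDistEmbedding).span.separableSpace
  let ι : L → E := fun a => ⟨truncDistEmbedding a, Submodule.subset_span ⟨a, rfl⟩⟩
  have hι : Continuous ι := continuous_truncDistEmbedding.subtype_mk _
  have h_mem (x : X) : MemLp (fun z => ι (f x z)) 1 η :=
    MemLp.of_bound (E := E) (hι.comp_aestronglyMeasurable (hf x)) 1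
      (ae_of_all _ fun z => norm_truncDistEmbedding_le (f x z))
  have h_edist (a b : L) : edist (ι a) (ι b) = min 1 (edist a b) := edist_truncDistEmbedding a b
  simpa only [h_edist, lintegralTruncEdist] using
    measure_prod_self_lintegral_edist_lt_ne_zero (E := E) (f := fun x z => ι (f x z)) μ h_mem hr

lemma lintegralTruncEdist_eq_zero_iff [EMetricSpace L] [SecondCountableTopology L]
    [MeasurableSpace L] [OpensMeasurableSpace L] {η : Measure Z} {f g : Z → L} (hf : Measurable f)
    (hg : Measurable g) : lintegralTruncEdist η f g = 0 ↔ f =ᵐ[η] g := by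
  rw [lintegralTruncEdist, lintegral_eq_zero_iff (measurable_const.min (hf.edist hg))]
  refine Filter.eventually_congr (ae_of_all _ fun z => ?_)
  change min 1 (edist (f z) (g z)) = 0 ↔ f z = g z
  exact (min_eq_bot.trans (or_iff_right one_ne_zero)).trans edist_eq_zero

lemma lintegralTruncEdist_map [PseudoEMetricSpace L] [SecondCountableTopology L]
    [MeasurableSpace L] [OpensMeasurableSpace L] {η : Measure X} {f g : Z → L} {S : X → Z}
    (hf : Measurable f) (hg : Measurable g) (hS : Measurable S) :
    lintegralTruncEdist (η.map S) f g = lintegralTruncEdist η (f ∘ S) (g ∘ S) :=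
  lintegral_map (measurable_const.min (hf.edist hg)) hS

lemma measurable_lintegralTruncEdist_kernel [PseudoEMetricSpace L] [SecondCountableTopology L]
    [MeasurableSpace L] [OpensMeasurableSpace L] (κ : Kernel X Z) [IsSFiniteKernel κ]
    {f g : X → Z → L} (hf : Measurable f.uncurry) (hg : Measurable g.uncurry) :
    Measurable fun x => lintegralTruncEdist (κ x) (f x) (g x) :=
  (measurable_const.min (hf.edist hg)).lintegral_kernel_prod_right'

end ConvergenceInMeasure

section BiinvariantMetric

variable {L : Type*} [Group L] [PseudoEMetricSpace L] [IsIsometricSMul L L]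
  [IsIsometricSMul Lᵐᵒᵖ L]

lemma isTopologicalGroup_of_isIsometricSMul : IsTopologicalGroup L where
  continuous_mul := by
    refine LipschitzWith.continuous (K := 2) fun p r => ?_
    calc edist (p.1 * p.2) (r.1 * r.2)
        ≤ edist (p.1 * p.2) (r.1 * p.2) + edist (r.1 * p.2) (r.1 * r.2) := edist_triangle _ _ _
      _ = edist p.1 r.1 + edist p.2 r.2 := by rw [edist_mul_right, edist_mul_left]
      _ ≤ edist p r + edist p r := add_le_add (le_max_left _ _) (le_max_right _ _)
      _ = 2 * edist p r := (two_mul _).symm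
  continuous_inv := isometry_inv.continuous

end BiinvariantMetric

section Extensions

variable {G X Y : Type*} [Group G] [MeasurableSpace X] [MeasurableSpace Y]

/-- `S` is an action of `G` on `X` by maps that preserve `μ`. -/
structure IsPMPAction (μ : Measure X) (S : G → X → X) : Prop where
  one_apply : ∀ x, S 1 x = x
  mul_apply : ∀ g h x, S (g * h) x = S g (S h x)
  measurePreserving : ∀ g, MeasurePreserving (S g) μ μ

/-- `q` is an extension of measure-preserving actions, from `S` on `(X, μ)` to `T` on `(Y, ν)`;
equivariance is only asked almost everywhere. -/
structure IsExtension (ν : Measure Y) (μ : Measure X) (T : G → Y → Y) (S : G → X → X)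
    (q : X → Y) : Prop where
  base : IsPMPAction ν T
  total : IsPMPAction μ S
  measurePreserving : MeasurePreserving q μ ν
  equivariant : ∀ g, ∀ᵐ x ∂μ, q (S g x) = T g (q x)

/-- `κ` is a disintegration of `μ` over `ν` along `q`. -/
structure IsDisintegration (ν : Measure Y) (μ : Measure X) (q : X → Y) (κ : Kernel Y X) :
    Prop where
  eq_bind : μ = ν.bind κ
  ae_ae_eq : ∀ᵐ y ∂ν, ∀ᵐ x ∂κ y, q x = y

/-- Every `S`-invariant measurable set is, up to a null set, the preimage of a measurable set
under `q`. -/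
def IsRelErgodic (μ : Measure X) (S : G → X → X) (q : X → Y) : Prop :=
  ∀ A : Set X, MeasurableSet A → (∀ g, S g ⁻¹' A =ᵐ[μ] A) →
    ∃ B : Set Y, MeasurableSet B ∧ A =ᵐ[μ] q ⁻¹' B

/-- The relatively independent joining of `ν.bind κ₀` and `ν.bind κ₁` over `ν`. -/
noncomputable def relJoining {X₀ X₁ : Type*} [MeasurableSpace X₀] [MeasurableSpace X₁]
    (ν : Measure Y) (κ₀ : Kernel Y X₀) (κ₁ : Kernel Y X₁) : Measure (X₀ × X₁) :=
  ν.bind fun y => (κ₀ y).prod (κ₁ y)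

/-- Relative weak mixing of the extension `q` with disintegration `κ`: the relatively independent
self-joining, with the diagonal action, is relatively ergodic over the base. -/
def IsRelWeaklyMixing (ν : Measure Y) (κ : Kernel Y X) (S : G → X → X) (q : X → Y) : Prop :=
  IsRelErgodic (relJoining ν κ κ) (fun g p => (S g p.1, S g p.2)) (fun p => q p.1)

end Extensions

section Disintegration

variable {G X Y : Type*} [MeasurableSpace X] [MeasurableSpace Y]
  {ν : Measure Y} {μ : Measure X} {T : G → Y → Y} {S : G → X → X} {q : X → Y} {κ : Kernel Y X}

namespace IsDisintegration

lemma ae_ae (hκ : IsDisintegration ν μ q κ) {p : X → Prop} (h : ∀ᵐ x ∂μ, p x) :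
    ∀ᵐ y ∂ν, ∀ᵐ x ∂κ y, p x :=
  Measure.ae_ae_of_ae_comp (hκ.eq_bind ▸ h)

lemma ae_of_ae_ae (hκ : IsDisintegration ν μ q κ) {p : X → Prop} (hp : MeasurableSet {x | p x})
    (h : ∀ᵐ y ∂ν, ∀ᵐ x ∂κ y, p x) : ∀ᵐ x ∂μ, p x :=
  hκ.eq_bind ▸ Measure.ae_comp_of_ae_ae hp h

lemma compProd_eq_map [SFinite ν] [IsSFiniteKernel κ] (hκ : IsDisintegration ν μ q κ)
    (hq : Measurable q) : ν ⊗ₘ κ = μ.map fun x => (q x, x) := by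
  refine Measure.ext_of_lintegral _ fun f hf => ?_
  have hf' : Measurable fun x => f (q x, x) := by fun_prop
  calc ∫⁻ z, f z ∂(ν ⊗ₘ κ) = ∫⁻ y, ∫⁻ x, f (y, x) ∂κ y ∂ν := Measure.lintegral_compProd hf
    _ = ∫⁻ y, ∫⁻ x, f (q x, x) ∂κ y ∂ν := by
        refine lintegral_congr_ae (hκ.ae_ae_eq.mono fun y hy => lintegral_congr_ae ?_)
        filter_upwards [hy] with x hx
        rw [hx]
    _ = ∫⁻ x, f (q x, x) ∂μ := by
        rw [hκ.eq_bind, Measure.lintegral_bind κ.measurable.aemeasurable hf'.aemeasurable]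
    _ = ∫⁻ z, f z ∂μ.map fun x => (q x, x) := (lintegral_map hf (by fun_prop)).symm

end IsDisintegration

namespace IsRelErgodic

lemma ae_mem (hS : IsRelErgodic μ S q) (hκ : IsDisintegration ν μ q κ) {A : Set X}
    (hA : MeasurableSet A) (h_inv : ∀ g, S g ⁻¹' A =ᵐ[μ] A) (h_pos : ∀ᵐ y ∂ν, κ y A ≠ 0) :
    ∀ᵐ x ∂μ, x ∈ A := by
  obtain ⟨B, -, hAB⟩ := hS A hA h_inv
  refine hκ.ae_of_ae_ae hA ?_
  filter_upwards [hκ.ae_ae hAB.mem_iff, hκ.ae_ae_eq, h_pos] with y hyAB hyq hyA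
  have h_iff : ∀ᵐ x ∂κ y, x ∈ A ↔ y ∈ B := by
    filter_upwards [hyAB, hyq] with x hxAB hxq
    rw [hxAB, Set.mem_preimage, hxq]
  by_cases hyB : y ∈ B
  · exact h_iff.mono fun x hx => hx.2 hyB
  · exact absurd (measure_eq_zero_iff_ae_notMem.2 (h_iff.mono fun x hx hxA => hyB (hx.1 hxA))) hyA

lemma ae_eq_zero (hS : IsRelErgodic μ S q) (hκ : IsDisintegration ν μ q κ) {f : X → ℝ≥0∞}
    (hf : Measurable f) (h_inv : ∀ g, ∀ᵐ x ∂μ, f (S g x) = f x)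
    (h_pos : ∀ r > 0, ∀ᵐ y ∂ν, κ y {x | f x < r} ≠ 0) : ∀ᵐ x ∂μ, f x = 0 := by
  have h_lt (n : ℕ) : ∀ᵐ x ∂μ, f x < (n : ℝ≥0∞)⁻¹ := by
    refine hS.ae_mem hκ (measurableSet_lt hf measurable_const) (fun g => ?_) (h_pos _ (by simp))
    filter_upwards [h_inv g] with x hx
    exact congrArg (· < (n : ℝ≥0∞)⁻¹) hx
  filter_upwards [ae_all_iff.2 h_lt] with x hx
  by_contra h_ne
  obtain ⟨n, hn⟩ := ENNReal.exists_inv_nat_lt h_ne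
  exact (hx n).not_gt hn

end IsRelErgodic

variable [Group G]

lemma IsPMPAction.compProd_comap [SFinite ν] [IsSFiniteKernel κ] (hT : IsPMPAction ν T) (g : G) :
    ν ⊗ₘ κ.comap (T g) (hT.measurePreserving g).measurable =
      (ν ⊗ₘ κ).map (Prod.map (T g⁻¹) id) := by
  have hTm (g : G) : Measurable (T g) := (hT.measurePreserving g).measurable
  refine Measure.ext_of_lintegral _ fun f hf => ?_
  have hTf : Measurable fun z : Y × X => f (T g⁻¹ z.1, z.2) := by
    have := hTm g⁻¹
    fun_prop
  calc ∫⁻ z, f z ∂(ν ⊗ₘ κ.comap (T g) (hTm g)) = ∫⁻ y, ∫⁻ x, f (y, x) ∂κ (T g y) ∂ν :=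
        Measure.lintegral_compProd hf
    _ = ∫⁻ y, ∫⁻ x, f (T g⁻¹ (T g y), x) ∂κ (T g y) ∂ν := by
        simp only [← hT.mul_apply, inv_mul_cancel, hT.one_apply]
    _ = ∫⁻ y, ∫⁻ x, f (T g⁻¹ y, x) ∂κ y ∂ν :=
        (hT.measurePreserving g).lintegral_comp hTf.lintegral_kernel_prod_right'
    _ = ∫⁻ z, f (T g⁻¹ z.1, z.2) ∂(ν ⊗ₘ κ) := (Measure.lintegral_compProd hTf).symm
    _ = ∫⁻ z, f z ∂(ν ⊗ₘ κ).map (Prod.map (T g⁻¹) id) :=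
        (lintegral_map hf ((hTm g⁻¹).prodMap measurable_id)).symm

lemma IsExtension.ae_kernel_apply_eq_map [IsFiniteMeasure ν] [IsFiniteKernel κ]
    [MeasurableSpace.CountablyGenerated X] (hq : IsExtension ν μ T S q)
    (hκ : IsDisintegration ν μ q κ) (g : G) : ∀ᵐ y ∂ν, κ (T g y) = (κ y).map (S g) := by
  -- Both sides disintegrate the joint law of `(q x, S g x)` over its first coordinate.
  have hS := hq.total.measurePreserving g
  have hTm (g : G) : Measurable (T g) := (hq.base.measurePreserving g).measurable
  have hqm := hq.measurePreserving.measurable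
  have h_comp : ν ⊗ₘ κ.comap (T g) (hTm g) = ν ⊗ₘ κ.map (S g) :=
    calc ν ⊗ₘ κ.comap (T g) (hTm g) = (ν ⊗ₘ κ).map (Prod.map (T g⁻¹) id) :=
          hq.base.compProd_comap g
      _ = μ.map fun x => (T g⁻¹ (q x), x) := by
          rw [hκ.compProd_eq_map hqm,
            Measure.map_map ((hTm g⁻¹).prodMap measurable_id) (by fun_prop)]
          rfl
      _ = μ.map fun x => (T g⁻¹ (q (S g x)), S g x) := by
          have hm : Measurable fun x => (T g⁻¹ (q x), x) :=
            ((hTm g⁻¹).comp hqm).prodMk measurable_id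
          conv_lhs => rw [← hS.map_eq, Measure.map_map hm hS.measurable]
          rfl
      _ = μ.map fun x => (q x, S g x) := by
          refine Measure.map_congr ?_
          filter_upwards [hq.equivariant g] with x hx
          rw [hx, ← hq.base.mul_apply, inv_mul_cancel, hq.base.one_apply]
      _ = ν ⊗ₘ κ.map (S g) := by
          rw [Measure.compProd_map hS.measurable, hκ.compProd_eq_map hqm,
            Measure.map_map (measurable_id.prodMap hS.measurable) (by fun_prop)]
          rfl
  filter_upwards [Kernel.ae_eq_of_compProd_eq h_comp] with y hy
  rwa [Kernel.comap_apply, Kernel.map_apply _ hS.measurable] at hy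

lemma measurePreserving_bind {T : Y → Y} {S : X → X} (hT : MeasurePreserving T ν ν)
    (hS : Measurable S) (hκ : ∀ᵐ y ∂ν, κ (T y) = (κ y).map S) :
    MeasurePreserving S (ν.bind κ) (ν.bind κ) := by
  refine ⟨hS, Measure.ext fun A hA => ?_⟩
  rw [Measure.map_apply hS hA, Measure.bind_apply (hS hA) κ.aemeasurable,
    Measure.bind_apply hA κ.aemeasurable, ← hT.lintegral_comp (κ.measurable_coe hA)]
  refine lintegral_congr_ae ?_
  filter_upwards [hκ] with y hy
  rw [hy, Measure.map_apply hS hA]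

end Disintegration

section RelJoining

variable {G Y X₀ X₁ : Type*} [MeasurableSpace Y] [MeasurableSpace X₀] [MeasurableSpace X₁]
  {ν : Measure Y} {μ₀ : Measure X₀} {μ₁ : Measure X₁} {q₀ : X₀ → Y} {q₁ : X₁ → Y}
  {κ₀ : Kernel Y X₀} {κ₁ : Kernel Y X₁}

lemma isDisintegration_relJoining [IsSFiniteKernel κ₀] [IsSFiniteKernel κ₁]
    (hκ₀ : IsDisintegration ν μ₀ q₀ κ₀) :
    IsDisintegration ν (relJoining ν κ₀ κ₁) (fun p => q₀ p.1) (κ₀ ×ₖ κ₁) where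
  eq_bind := congrArg ν.bind (funext fun y => (Kernel.prod_apply κ₀ κ₁ y).symm)
  ae_ae_eq := by
    filter_upwards [hκ₀.ae_ae_eq] with y hy
    rw [Kernel.prod_apply]
    exact Measure.quasiMeasurePreserving_fst.ae hy

lemma ae_relJoining_iff [IsSFiniteKernel κ₀] [IsSFiniteKernel κ₁] {p : X₀ × X₁ → Prop}
    (hp : MeasurableSet {x | p x}) :
    (∀ᵐ x ∂relJoining ν κ₀ κ₁, p x) ↔ ∀ᵐ y ∂ν, ∀ᵐ x ∂(κ₀ y).prod (κ₁ y), p x := by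
  simp only [relJoining, ← Kernel.prod_apply]
  exact Measure.ae_comp_iff hp

lemma measurePreserving_relJoining [IsFiniteMeasure ν] [IsFiniteKernel κ₀] [IsFiniteKernel κ₁]
    [MeasurableSpace.CountablyGenerated X₀] [MeasurableSpace.CountablyGenerated X₁] [Group G]
    {T : G → Y → Y} {S₀ : G → X₀ → X₀} {S₁ : G → X₁ → X₁} (hq₀ : IsExtension ν μ₀ T S₀ q₀)
    (hκ₀ : IsDisintegration ν μ₀ q₀ κ₀) (hq₁ : IsExtension ν μ₁ T S₁ q₁)
    (hκ₁ : IsDisintegration ν μ₁ q₁ κ₁) (g : G) :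
    MeasurePreserving (Prod.map (S₀ g) (S₁ g)) (relJoining ν κ₀ κ₁) (relJoining ν κ₀ κ₁) := by
  have hS₀ := (hq₀.total.measurePreserving g).measurable
  have hS₁ := (hq₁.total.measurePreserving g).measurable
  simp only [relJoining, ← Kernel.prod_apply]
  refine measurePreserving_bind (hq₀.base.measurePreserving g) (hS₀.prodMap hS₁) ?_
  filter_upwards [hq₀.ae_kernel_apply_eq_map hκ₀ g, hq₁.ae_kernel_apply_eq_map hκ₁ g] with y h₀ h₁
  rw [Kernel.prod_apply, Kernel.prod_apply, h₀, h₁, Measure.map_prod_map _ _ hS₀ hS₁]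

lemma exists_measurable_comp_ae_eq_of_ae_relJoining [StandardBorelSpace X₀] [Nonempty X₀]
    [SFinite ν] [IsMarkovKernel κ₀] [IsMarkovKernel κ₁]
    {L : Type*} [MeasurableSpace L] [MeasurableEq L]
    (hκ₀ : IsDisintegration ν μ₀ q₀ κ₀) (hκ₁ : IsDisintegration ν μ₁ q₁ κ₁)
    (hq₀ : Measurable q₀) (hq₁ : Measurable q₁) {f₀ : X₀ → L} {f₁ : X₁ → L} (hf₀ : Measurable f₀)
    (hf₁ : Measurable f₁) (h : ∀ᵐ p ∂relJoining ν κ₀ κ₁, f₀ p.1 = f₁ p.2) :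
    ∃ w : Y → L, Measurable w ∧ (∀ᵐ x ∂μ₀, w (q₀ x) = f₀ x) ∧ ∀ᵐ x ∂μ₁, w (q₁ x) = f₁ x := by
  -- Take `w y = f₀ (σ y)` for a measurable choice of a point `σ y` of the fibre of `X₀` such that
  -- `f₀ (σ y) = f₁ x₁` for almost every `x₁` in the fibre of `X₁`.
  have hm : MeasurableSet {p : X₀ × X₁ | f₀ p.1 = f₁ p.2} :=
    measurableSet_eq_fun (hf₀.comp measurable_fst) (hf₁.comp measurable_snd)
  have h_fib : ∀ᵐ y ∂ν, ∀ᵐ x₀ ∂κ₀ y, ∀ᵐ x₁ ∂κ₁ y, f₀ x₀ = f₁ x₁ :=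
    ((ae_relJoining_iff hm).1 h).mono fun y hy => Measure.ae_ae_of_ae_prod hy
  obtain ⟨σ, hσm, hσ⟩ := exists_measurable_ae_ae_of_ae_ae_ae_kernel hm h_fib
  refine ⟨f₀ ∘ σ, hf₀.comp hσm,
    hκ₀.ae_of_ae_ae (measurableSet_eq_fun ((hf₀.comp hσm).comp hq₀) hf₀) ?_,
    hκ₁.ae_of_ae_ae (measurableSet_eq_fun ((hf₀.comp hσm).comp hq₁) hf₁) ?_⟩
  · filter_upwards [hσ, h_fib, hκ₀.ae_ae_eq] with y hyσ hy hyq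
    filter_upwards [hy, hyq] with x₀ hx₀ hxq
    obtain ⟨x₁, hσ₁, h₁⟩ := (hyσ.and hx₀).exists
    rw [Function.comp_apply, hxq, hσ₁, h₁]
  · filter_upwards [hσ, hκ₁.ae_ae_eq] with y hyσ hyq
    filter_upwards [hyσ, hyq] with x₁ hx₁ hxq
    rw [Function.comp_apply, hxq, hx₁]

end RelJoining

section Cocycles

variable {G X Y L : Type*} [Group G] [Group L] [MeasurableSpace X] [MeasurableSpace Y]

/-- The cocycle cohomologous to `w` through the transfer function `φ`. -/
def twistCocycle (S : G → X → X) (φ : X → L) (w : G → X → L) (g : G) (x : X) : L :=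
  φ (S g x) * w g x * (φ x)⁻¹

lemma ae_twistCocycle_eq {X₀ X₁ : Type*} [MeasurableSpace X₀] [MeasurableSpace X₁]
    [MeasurableSpace.CountablyGenerated X₀] [MeasurableSpace.CountablyGenerated X₁]
    {ν : Measure Y} [IsFiniteMeasure ν] {μ₀ : Measure X₀} {μ₁ : Measure X₁}
    {T : G → Y → Y} {S₀ : G → X₀ → X₀} {S₁ : G → X₁ → X₁} {q₀ : X₀ → Y} {q₁ : X₁ → Y}
    {κ₀ : Kernel Y X₀} [IsFiniteKernel κ₀] {κ₁ : Kernel Y X₁} [IsFiniteKernel κ₁]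
    (hq₀ : IsExtension ν μ₀ T S₀ q₀) (hκ₀ : IsDisintegration ν μ₀ q₀ κ₀)
    (hq₁ : IsExtension ν μ₁ T S₁ q₁) (hκ₁ : IsDisintegration ν μ₁ q₁ κ₁)
    {w₀ : G → X₀ → L} {w₁ : G → X₁ → L} {F : X₀ × X₁ → L}
    (h_main : ∀ g, ∀ᵐ p ∂relJoining ν κ₀ κ₁,
      w₀ g p.1 = F (S₀ g p.1, S₁ g p.2) * w₁ g p.2 * (F p)⁻¹)
    {φ₀ : X₀ → L} {φ₁ : X₁ → L}
    (h_split : ∀ᵐ p ∂relJoining ν κ₀ κ₁, F p = (φ₀ p.1)⁻¹ * φ₁ p.2) (g : G) :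
    ∀ᵐ p ∂relJoining ν κ₀ κ₁, twistCocycle S₀ φ₀ w₀ g p.1 = twistCocycle S₁ φ₁ w₁ g p.2 := by
  have h_diag := measurePreserving_relJoining hq₀ hκ₀ hq₁ hκ₁ g
  filter_upwards [h_main g, h_split, h_diag.quasiMeasurePreserving.ae h_split] with p hp hF hgF
  rw [Prod.map_apply'] at hgF
  rw [twistCocycle, twistCocycle, hp, hF, hgF]
  group

variable [MeasurableSpace L] [MeasurableMul₂ L]

lemma IsCocycle.twist [MeasurableInv L] {μ : Measure X} {S : G → X → X} {w : G → X → L}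
    (hw : IsCocycle μ S w) (hS : IsPMPAction μ S) {φ : X → L} (hφ : Measurable φ) :
    IsCocycle μ S (twistCocycle S φ w) := by
  refine ⟨fun g => ?_, fun g h => ?_⟩
  · exact ((hφ.comp (hS.measurePreserving g).measurable).mul (hw.1 g)).mul hφ.inv
  · filter_upwards [hw.2 g h] with x hx
    simp only [twistCocycle, hS.mul_apply, hx]
    group

lemma IsCocycle.of_comp_ae_eq [MeasurableEq L] {ν : Measure Y} {μ : Measure X} {T : G → Y → Y}
    {S : G → X → X} {q : X → Y} {v : G → X → L} {w : G → Y → L} (hv : IsCocycle μ S v)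
    (hq : IsExtension ν μ T S q) (hw : ∀ g, Measurable (w g))
    (hwv : ∀ g, ∀ᵐ x ∂μ, w g (q x) = v g x) : IsCocycle ν T w := by
  refine ⟨hw, fun g h => ?_⟩
  have hm : MeasurableSet {y | w (g * h) y = w g (T h y) * w h y} :=
    measurableSet_eq_fun (hw _)
      (((hw g).comp (hq.base.measurePreserving h).measurable).mul (hw h))
  rw [← hq.measurePreserving.map_eq, ae_map_iff hq.measurePreserving.aemeasurable hm]
  filter_upwards [hwv (g * h), hwv h, hq.equivariant h, hv.2 g h,
    (hq.total.measurePreserving h).quasiMeasurePreserving.ae (hwv g)] with x hgh hh hqx hvx hg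
  rw [hgh, hvx, hh, ← hqx, hg]

end Cocycles

section Untwisting

variable {G Y X₀ X₁ L : Type*} [Group L] {F : X₀ × X₁ → L}

/-- The comparison `F(x₀', b) F(x₀, b)⁻¹` of the values of `F` at two points of a fibre of `X₀`, as
seen from the point `b` of `X₁`. -/
def fiberRatio (F : X₀ × X₁ → L) (b : X₁) (z : X₀ × X₀) : L :=
  F (z.2, b) * (F (z.1, b))⁻¹

lemma fiberRatio_map {S : X₀ → X₀} {v : X₀ → L} {b b' : X₁} {c : L} {z : X₀ × X₀}
    (h_fst : v z.1 = F (S z.1, b') * c * (F (z.1, b))⁻¹)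
    (h_snd : v z.2 = F (S z.2, b') * c * (F (z.2, b))⁻¹) :
    fiberRatio F b' (Prod.map S S z) = v z.2 * fiberRatio F b z * (v z.1)⁻¹ := by
  rw [h_fst, h_snd, fiberRatio, fiberRatio, Prod.map_fst, Prod.map_snd]
  group

variable [Group G] [MeasurableSpace Y] [MeasurableSpace X₀] [MeasurableSpace X₁]

@[fun_prop]
lemma measurable_fiberRatio [MeasurableSpace L] [MeasurableMul₂ L] [MeasurableInv L]
    {α : Type*} [MeasurableSpace α] (hF : Measurable F) {b : α → X₁} (hb : Measurable b)
    {z : α → X₀ × X₀} (hz : Measurable z) : Measurable fun a => fiberRatio F (b a) (z a) := by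
  unfold fiberRatio
  fun_prop

/-- The distance, in measure on the square of the fibre of `X₀`, between the comparisons
`fiberRatio F b` and `fiberRatio F b'` seen from two points of a fibre of `X₁`. -/
noncomputable def fiberRatioDist [PseudoEMetricSpace L] (κ₀ : Kernel Y X₀) (q₁ : X₁ → Y)
    (F : X₀ × X₁ → L) (p : X₁ × X₁) : ℝ≥0∞ :=
  lintegralTruncEdist ((κ₀ (q₁ p.1)).prod (κ₀ (q₁ p.1))) (fiberRatio F p.1) (fiberRatio F p.2)

variable [MetricSpace L] [SecondCountableTopology L] [MeasurableSpace L] [BorelSpace L]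
  [MeasurableMul₂ L] [MeasurableInv L] {ν : Measure Y} {μ₀ : Measure X₀} {μ₁ : Measure X₁}
  {T : G → Y → Y} {S₀ : G → X₀ → X₀} {S₁ : G → X₁ → X₁} {q₀ : X₀ → Y} {q₁ : X₁ → Y}
  {κ₀ : Kernel Y X₀} {κ₁ : Kernel Y X₁} {w₀ : G → X₀ → L} {w₁ : G → X₁ → L}

lemma measurable_fiberRatioDist [IsSFiniteKernel κ₀] (hF : Measurable F) (hq₁ : Measurable q₁) :
    Measurable (fiberRatioDist κ₀ q₁ F) := by
  unfold fiberRatioDist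
  simpa only [Kernel.comap_apply, Kernel.prod_apply] using
    measurable_lintegralTruncEdist_kernel
      ((κ₀ ×ₖ κ₀).comap (fun p : X₁ × X₁ => q₁ p.1) (hq₁.comp measurable_fst))
      (f := fun p => fiberRatio F p.1) (g := fun p => fiberRatio F p.2)
      (by simp only [Function.uncurry_def]; fun_prop)
      (by simp only [Function.uncurry_def]; fun_prop)

lemma lintegralTruncEdist_fiberRatio_map [IsIsometricSMul L L] [IsIsometricSMul Lᵐᵒᵖ L]
    (hF : Measurable F) {η : Measure X₀} [SFinite η] {S : X₀ → X₀} (hS : Measurable S)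
    {v : X₀ → L} {b₁ b₂ b₁' b₂' : X₁} {c₁ c₂ : L}
    (h₁ : ∀ᵐ a ∂η, v a = F (S a, b₁') * c₁ * (F (a, b₁))⁻¹)
    (h₂ : ∀ᵐ a ∂η, v a = F (S a, b₂') * c₂ * (F (a, b₂))⁻¹) :
    lintegralTruncEdist ((η.map S).prod (η.map S)) (fiberRatio F b₁') (fiberRatio F b₂') =
      lintegralTruncEdist (η.prod η) (fiberRatio F b₁) (fiberRatio F b₂) := by
  -- The untwisting equation multiplies both comparisons by the same elements on the left and on
  -- the right, which a bi-invariant metric does not see.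
  have hR (b : X₁) : Measurable (fiberRatio F b) := by fun_prop
  rw [Measure.map_prod_map _ _ hS hS, lintegralTruncEdist_map (hR _) (hR _) (hS.prodMap hS)]
  refine lintegral_congr_ae ?_
  filter_upwards [Measure.quasiMeasurePreserving_fst.ae (h₁.and h₂),
    Measure.quasiMeasurePreserving_snd.ae (h₁.and h₂)] with z h_fst h_snd
  simp only [Function.comp_apply]
  rw [fiberRatio_map h_fst.1 h_snd.1, fiberRatio_map h_fst.2 h_snd.2, edist_mul_right,
    edist_mul_left]

lemma ae_fiberRatioDist_comp_eq [IsFiniteMeasure ν] [IsFiniteKernel κ₀] [IsFiniteKernel κ₁]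
    [MeasurableSpace.CountablyGenerated X₀] [IsIsometricSMul L L] [IsIsometricSMul Lᵐᵒᵖ L]
    (hq₀ : IsExtension ν μ₀ T S₀ q₀) (hκ₀ : IsDisintegration ν μ₀ q₀ κ₀)
    (hq₁ : IsExtension ν μ₁ T S₁ q₁) (hκ₁ : IsDisintegration ν μ₁ q₁ κ₁)
    (hw₀ : ∀ g, Measurable (w₀ g)) (hw₁ : ∀ g, Measurable (w₁ g)) (hF : Measurable F)
    (h_main : ∀ g, ∀ᵐ p ∂relJoining ν κ₀ κ₁,
      w₀ g p.1 = F (S₀ g p.1, S₁ g p.2) * w₁ g p.2 * (F p)⁻¹) (g : G) :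
    ∀ᵐ p ∂relJoining ν κ₁ κ₁,
      fiberRatioDist κ₀ q₁ F (S₁ g p.1, S₁ g p.2) = fiberRatioDist κ₀ q₁ F p := by
  have hS₀ := (hq₀.total.measurePreserving g).measurable
  have hS₁ := (hq₁.total.measurePreserving g).measurable
  have hD : Measurable (fiberRatioDist κ₀ q₁ F) :=
    measurable_fiberRatioDist hF hq₁.measurePreserving.measurable
  have hm : MeasurableSet {p : X₀ × X₁ |
      w₀ g p.1 = F (S₀ g p.1, S₁ g p.2) * w₁ g p.2 * (F p)⁻¹} := by
    have := hw₀ g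
    have := hw₁ g
    exact measurableSet_eq_fun (by fun_prop) (by fun_prop)
  refine (ae_relJoining_iff (measurableSet_eq_fun (by fun_prop) hD)).2 ?_
  filter_upwards [hq₀.ae_kernel_apply_eq_map hκ₀ g, hκ₁.ae_ae_eq, hκ₁.ae_ae (hq₁.equivariant g),
    (ae_relJoining_iff hm).1 (h_main g)] with y hyκ hyq hyT hy
  have h_good := hyq.and (hyT.and ((Measure.ae_ae_comm hm).1 (Measure.ae_ae_of_ae_prod hy)))
  filter_upwards [Measure.quasiMeasurePreserving_fst.ae h_good,
    Measure.quasiMeasurePreserving_snd.ae h_good] with p hp hp'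
  obtain ⟨hpq, hpT, h_fst⟩ := hp
  obtain ⟨-, -, h_snd⟩ := hp'
  rw [fiberRatioDist, fiberRatioDist, hpT, hpq, hyκ]
  exact lintegralTruncEdist_fiberRatio_map hF hS₀ h_fst h_snd

lemma ae_measure_fiberRatioDist_lt_ne_zero [IsFiniteKernel κ₀] [IsMarkovKernel κ₁]
    [MeasurableSpace.CountablyGenerated X₀] (hκ₁ : IsDisintegration ν μ₁ q₁ κ₁)
    (hF : Measurable F) {r : ℝ≥0∞} (hr : 0 < r) :
    ∀ᵐ y ∂ν, (κ₁ ×ₖ κ₁) y {p | fiberRatioDist κ₀ q₁ F p < r} ≠ 0 := by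
  filter_upwards [hκ₁.ae_ae_eq] with y hy
  rw [Kernel.prod_apply]
  convert measure_prod_self_lintegralTruncEdist_lt_ne_zero ((κ₀ y).prod (κ₀ y)) (κ₁ y)
    (f := fiberRatio F) (fun b =>
      Measurable.aestronglyMeasurable (by fun_prop)) hr using 1
  refine measure_congr ?_
  filter_upwards [Measure.quasiMeasurePreserving_fst.ae hy] with p hp
  change (fiberRatioDist κ₀ q₁ F p < r) = _
  rw [fiberRatioDist, hp]
  rfl

lemma ae_ae_fiberRatio_eq [IsSFiniteKernel κ₀] [IsSFiniteKernel κ₁]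
    (hκ₁ : IsDisintegration ν μ₁ q₁ κ₁) (hq₁ : Measurable q₁) (hF : Measurable F)
    (h_zero : ∀ᵐ p ∂relJoining ν κ₁ κ₁, fiberRatioDist κ₀ q₁ F p = 0) :
    ∀ᵐ y ∂ν, ∀ᵐ s ∂(κ₀ y).prod (κ₁ y), ∀ᵐ t ∂(κ₀ y).prod (κ₁ y),
      fiberRatio F s.2 (s.1, t.1) = fiberRatio F t.2 (s.1, t.1) := by
  have hR (b : X₁) : Measurable (fiberRatio F b) := by fun_prop
  have hm : MeasurableSet {x : (X₁ × X₁) × X₀ × X₀ |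
      fiberRatio F x.1.1 x.2 = fiberRatio F x.1.2 x.2} :=
    measurableSet_eq_fun (by fun_prop) (by fun_prop)
  have h_zero' := (ae_relJoining_iff (measurableSet_eq_fun (measurable_fiberRatioDist hF hq₁)
    measurable_const)).1 h_zero
  filter_upwards [h_zero', hκ₁.ae_ae_eq] with y hy hyq
  refine ae_ae_prod_of_ae_ae_prod (p := fun a a' b b' => fiberRatio F b (a, a') =
    fiberRatio F b' (a, a')) (measurable_swap hm) ((Measure.ae_ae_comm hm).1 ?_)
  filter_upwards [hy, Measure.quasiMeasurePreserving_fst.ae hyq] with p hp hpq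
  rwa [fiberRatioDist, hpq, lintegralTruncEdist_eq_zero_iff (hR _) (hR _)] at hp

lemma exists_measurable_eq_inv_mul [StandardBorelSpace X₀] [StandardBorelSpace X₁] [Nonempty X₀]
    [Nonempty X₁] [SFinite ν] [IsMarkovKernel κ₀] [IsMarkovKernel κ₁]
    (hκ₀ : IsDisintegration ν μ₀ q₀ κ₀) (hκ₁ : IsDisintegration ν μ₁ q₁ κ₁) (hq₀ : Measurable q₀)
    (hq₁ : Measurable q₁) (hF : Measurable F)
    (h : ∀ᵐ y ∂ν, ∀ᵐ s ∂(κ₀ y).prod (κ₁ y), ∀ᵐ t ∂(κ₀ y).prod (κ₁ y),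
      fiberRatio F s.2 (s.1, t.1) = fiberRatio F t.2 (s.1, t.1)) :
    ∃ (φ₀ : X₀ → L) (φ₁ : X₁ → L), Measurable φ₀ ∧ Measurable φ₁ ∧
      ∀ᵐ p ∂relJoining ν κ₀ κ₁, F p = (φ₀ p.1)⁻¹ * φ₁ p.2 := by
  -- For a measurable choice of a base point `s y` of the fibre of the joining, the equality of
  -- comparisons reads `F(x₀, x₁) = F(x₀, s₁) F(s₀, s₁)⁻¹ F(s₀, x₁)`.
  have hm : MeasurableSet {x : (X₀ × X₁) × X₀ × X₁ |
      fiberRatio F x.1.2 (x.1.1, x.2.1) = fiberRatio F x.2.2 (x.1.1, x.2.1)} :=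
    measurableSet_eq_fun (by fun_prop) (by fun_prop)
  obtain ⟨s, hs, h_split⟩ := exists_measurable_ae_ae_of_ae_ae_ae_kernel
    (κ := κ₀ ×ₖ κ₁) (η := κ₀ ×ₖ κ₁) hm (by simpa only [Kernel.prod_apply] using h)
  let φ₀ : X₀ → L := fun x => F (s (q₀ x)) * (F (x, (s (q₀ x)).2))⁻¹
  let φ₁ : X₁ → L := fun x => F ((s (q₁ x)).1, x)
  have hφ₀ : Measurable φ₀ := by fun_prop
  have hφ₁ : Measurable φ₁ := by fun_prop
  have hm_split : MeasurableSet {p | F p = (φ₀ p.1)⁻¹ * φ₁ p.2} :=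
    measurableSet_eq_fun hF
      ((hφ₀.comp measurable_fst).inv.mul (hφ₁.comp measurable_snd))
  refine ⟨φ₀, φ₁, hφ₀, hφ₁, (ae_relJoining_iff hm_split).2 ?_⟩
  filter_upwards [h_split, hκ₀.ae_ae_eq, hκ₁.ae_ae_eq] with y hy hyq₀ hyq₁
  rw [Kernel.prod_apply] at hy
  filter_upwards [hy, Measure.quasiMeasurePreserving_fst.ae hyq₀,
    Measure.quasiMeasurePreserving_snd.ae hyq₁] with t ht htq₀ htq₁
  simp only [φ₀, φ₁, htq₀, htq₁, mul_inv_rev, inv_inv]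
  rw [← mul_inv_eq_iff_eq_mul]
  exact ht.symm

end Untwisting

theorem untwisting_asymmetric_general
    {G : Type*} [Group G]
    {Y X₀ X₁ : Type*} [MeasurableSpace Y]
    [MeasurableSpace X₀] [StandardBorelSpace X₀]
    [MeasurableSpace X₁] [StandardBorelSpace X₁]
    {ν : Measure Y} [IsProbabilityMeasure ν] {μ₀ : Measure X₀} {μ₁ : Measure X₁}
    {T : G → Y → Y} {S₀ : G → X₀ → X₀} {S₁ : G → X₁ → X₁} {q₀ : X₀ → Y} {q₁ : X₁ → Y}
    {κ₀ : Kernel Y X₀} [IsMarkovKernel κ₀] {κ₁ : Kernel Y X₁} [IsMarkovKernel κ₁]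
    (hq₀ : IsExtension ν μ₀ T S₀ q₀) (hκ₀ : IsDisintegration ν μ₀ q₀ κ₀)
    (hq₁ : IsExtension ν μ₁ T S₁ q₁) (hκ₁ : IsDisintegration ν μ₁ q₁ κ₁)
    (h_rwm : IsRelWeaklyMixing ν κ₁ S₁ q₁)
    {L : Type*} [Group L] [MetricSpace L] [IsIsometricSMul L L] [IsIsometricSMul Lᵐᵒᵖ L]
    [TopologicalSpace.SeparableSpace L] [MeasurableSpace L] [BorelSpace L]
    {w₀ : G → X₀ → L} (hw₀ : IsCocycle μ₀ S₀ w₀) {w₁ : G → X₁ → L} (hw₁ : IsCocycle μ₁ S₁ w₁)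
    {F : X₀ × X₁ → L} (hF : Measurable F)
    (h_main : ∀ g, ∀ᵐ p ∂relJoining ν κ₀ κ₁,
      w₀ g p.1 = F (S₀ g p.1, S₁ g p.2) * w₁ g p.2 * (F p)⁻¹) :
    ∃ (φ₀ : X₀ → L) (φ₁ : X₁ → L) (w : G → Y → L),
      Measurable φ₀ ∧ Measurable φ₁ ∧ IsCocycle ν T w ∧
      (∀ᵐ p ∂relJoining ν κ₀ κ₁, F p = (φ₀ p.1)⁻¹ * φ₁ p.2) ∧
      (∀ g, ∀ᵐ x ∂μ₀, w g (q₀ x) = twistCocycle S₀ φ₀ w₀ g x) ∧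
      ∀ g, ∀ᵐ x ∂μ₁, w g (q₁ x) = twistCocycle S₁ φ₁ w₁ g x := by
  have := UniformSpace.secondCountable_of_separable L
  have : IsTopologicalGroup L := isTopologicalGroup_of_isIsometricSMul
  obtain ⟨y⟩ := ν.nonempty_of_neZero
  have := (κ₀ y).nonempty_of_neZero
  have := (κ₁ y).nonempty_of_neZero
  have hq₀m := hq₀.measurePreserving.measurable
  have hq₁m := hq₁.measurePreserving.measurable
  have h_zero : ∀ᵐ p ∂relJoining ν κ₁ κ₁, fiberRatioDist κ₀ q₁ F p = 0 :=
    h_rwm.ae_eq_zero (isDisintegration_relJoining hκ₁) (measurable_fiberRatioDist hF hq₁m)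
      (ae_fiberRatioDist_comp_eq hq₀ hκ₀ hq₁ hκ₁ hw₀.1 hw₁.1 hF h_main)
      fun _ hr => ae_measure_fiberRatioDist_lt_ne_zero hκ₁ hF hr
  obtain ⟨φ₀, φ₁, hφ₀, hφ₁, h_split⟩ := exists_measurable_eq_inv_mul hκ₀ hκ₁ hq₀m hq₁m hF
    (ae_ae_fiberRatio_eq hκ₁ hq₁m hF h_zero)
  have hv₀ := hw₀.twist hq₀.total hφ₀
  have hv₁ := hw₁.twist hq₁.total hφ₁
  choose w hwm hwv₀ hwv₁ using fun g =>
    exists_measurable_comp_ae_eq_of_ae_relJoining hκ₀ hκ₁ hq₀m hq₁m (hv₀.1 g) (hv₁.1 g)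
      (ae_twistCocycle_eq hq₀ hκ₀ hq₁ hκ₁ h_main h_split g)
  exact ⟨φ₀, φ₁, w, hφ₀, hφ₁, hv₀.of_comp_ae_eq hq₀ hwm hwv₀, h_split, hwv₀, hwv₁⟩

/-- Untwisting lemma, asymmetric version.  Let `q0 : X0 → Y` and `q1 : X1 → Y` be
extensions of a p.m.p. `G`-action on `Y`, with `q1` relatively weakly mixing, let `L`
be a Polish group with bi-invariant metric, `w0, w1` measurable cocycles, and suppose
`F : X0 ⊗_Y X1 → L` satisfies `w0(g,x0) = F(g x0, g x1) w1(g,x1) F(x0,x1)⁻¹` a.e.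
Then there are measurable `φ0, φ1` and a measurable cocycle `w` on `Y` with
`F(x0,x1) = φ0(x0)⁻¹ φ1(x1)`, `w(g, q0 x0) = φ0(g x0) w0(g,x0) φ0(x0)⁻¹` and
`w(g, q1 x1) = φ1(g x1) w1(g,x1) φ1(x1)⁻¹` almost everywhere. -/
theorem untwisting_asymmetric
    {G : Type*} [Group G] [Countable G]
    {Y X₀ X₁ : Type*} [MeasurableSpace Y] [StandardBorelSpace Y]
    [MeasurableSpace X₀] [StandardBorelSpace X₀]
    [MeasurableSpace X₁] [StandardBorelSpace X₁]
    (ν : Measure Y) [IsProbabilityMeasure ν]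
    (μ₀ : Measure X₀) [IsProbabilityMeasure μ₀]
    (μ₁ : Measure X₁) [IsProbabilityMeasure μ₁]
    (T : G → Y → Y) (S₀ : G → X₀ → X₀) (S₁ : G → X₁ → X₁)
    (hT_one : ∀ y, T 1 y = y) (hT_mul : ∀ g h y, T (g * h) y = T g (T h y))
    (hT_pmp : ∀ g, MeasurePreserving (T g) ν ν)
    (hS₀_one : ∀ x, S₀ 1 x = x) (hS₀_mul : ∀ g h x, S₀ (g * h) x = S₀ g (S₀ h x))
    (hS₀_pmp : ∀ g, MeasurePreserving (S₀ g) μ₀ μ₀)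
    (hS₁_one : ∀ x, S₁ 1 x = x) (hS₁_mul : ∀ g h x, S₁ (g * h) x = S₁ g (S₁ h x))
    (hS₁_pmp : ∀ g, MeasurePreserving (S₁ g) μ₁ μ₁)
    (q₀ : X₀ → Y) (hq₀ : MeasurePreserving q₀ μ₀ ν)
    (hq₀_equiv : ∀ g : G, ∀ᵐ x ∂μ₀, q₀ (S₀ g x) = T g (q₀ x))
    (q₁ : X₁ → Y) (hq₁ : MeasurePreserving q₁ μ₁ ν)
    (hq₁_equiv : ∀ g : G, ∀ᵐ x ∂μ₁, q₁ (S₁ g x) = T g (q₁ x))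
    (κ₀ : Kernel Y X₀) [IsMarkovKernel κ₀]
    (hκ₀_disint : μ₀ = ν.bind (fun y => κ₀ y))
    (hκ₀_fiber : ∀ᵐ y ∂ν, (κ₀ y) ((q₀ ⁻¹' {y})ᶜ) = 0)
    (κ₁ : Kernel Y X₁) [IsMarkovKernel κ₁]
    (hκ₁_disint : μ₁ = ν.bind (fun y => κ₁ y))
    (hκ₁_fiber : ∀ᵐ y ∂ν, (κ₁ y) ((q₁ ⁻¹' {y})ᶜ) = 0)
    (joint : Measure (X₀ × X₁))
    (h_joint : joint = ν.bind (fun y => (κ₀ y).prod (κ₁ y)))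
    (selfProd₁ : Measure (X₁ × X₁))
    (h_selfProd₁ : selfProd₁ = ν.bind (fun y => (κ₁ y).prod (κ₁ y)))
    (h_rwm : ∀ A : Set (X₁ × X₁), MeasurableSet A →
      (∀ g : G, (fun p : X₁ × X₁ => (S₁ g p.1, S₁ g p.2)) ⁻¹' A =ᵐ[selfProd₁] A) →
      ∃ B : Set Y, MeasurableSet B ∧ A =ᵐ[selfProd₁] ((fun p : X₁ × X₁ => q₁ p.1) ⁻¹' B))
    {L : Type*} [Group L] [MetricSpace L] [CompleteSpace L]
    [TopologicalSpace.SeparableSpace L] [MeasurableSpace L] [BorelSpace L]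
    (h_dist_left : ∀ a b c : L, dist (c * a) (c * b) = dist a b)
    (h_dist_right : ∀ a b c : L, dist (a * c) (b * c) = dist a b)
    (w₀ : G → X₀ → L) (hw₀ : IsCocycle μ₀ S₀ w₀)
    (w₁ : G → X₁ → L) (hw₁ : IsCocycle μ₁ S₁ w₁)
    (F : X₀ × X₁ → L) (hF : Measurable F)
    (h_main : ∀ g : G, ∀ᵐ p ∂joint,
      w₀ g p.1 = F (S₀ g p.1, S₁ g p.2) * w₁ g p.2 * (F p)⁻¹) :
    ∃ (φ₀ : X₀ → L) (φ₁ : X₁ → L) (w : G → Y → L),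
      Measurable φ₀ ∧ Measurable φ₁ ∧ IsCocycle ν T w ∧
      (∀ᵐ p ∂joint, F p = (φ₀ p.1)⁻¹ * φ₁ p.2) ∧
      (∀ g : G, ∀ᵐ x ∂μ₀, w g (q₀ x) = φ₀ (S₀ g x) * w₀ g x * (φ₀ x)⁻¹) ∧
      (∀ g : G, ∀ᵐ x ∂μ₁, w g (q₁ x) = φ₁ (S₁ g x) * w₁ g x * (φ₁ x)⁻¹) := by
  subst h_joint h_selfProd₁
  have : IsIsometricSMul L L := ⟨fun c => Isometry.of_dist_eq fun a b => h_dist_left a b c⟩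
  have : IsIsometricSMul Lᵐᵒᵖ L :=
    ⟨fun c => Isometry.of_dist_eq fun a b => h_dist_right a b c.unop⟩
  have hT : IsPMPAction ν T := ⟨hT_one, hT_mul, hT_pmp⟩
  exact untwisting_asymmetric_general
    ⟨hT, ⟨hS₀_one, hS₀_mul, hS₀_pmp⟩, hq₀, hq₀_equiv⟩ ⟨hκ₀_disint, hκ₀_fiber⟩
    ⟨hT, ⟨hS₁_one, hS₁_mul, hS₁_pmp⟩, hq₁, hq₁_equiv⟩ ⟨hκ₁_disint, hκ₁_fiber⟩
    h_rwm hw₀ hw₁ hF h_main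
end

section
/- Let R be an ergodic measure-preserving countable Borel equivalence relation on a standard probability space (X, μ), and let A, B ⊆ X be Borel sets with μ(A) = μ(B) > 0. Then, after discarding a null set, there exists a Borel bijection θ : A → B whose graph is contained in R. -/
open MeasureTheory
open scoped ENNReal

/-!
Code partial Borel bijections by their graphs, ordered by inclusion. An exhaustion argument yields a
graph `G ⊆ R ∩ A ×ˢ B` that cannot be enlarged by a piece with domain of positive measure. The
parts `C ⊆ A` and `D ⊆ B` left over have equal measure because `R` preserves `μ`. If they were not
null, ergodicity would make the set of `x ∈ C` related to some point of `D` non-null: otherwise,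
after removing a null set, an invariant Borel set would separate `C` from `D`, by iterating Lusin
separation of the analytic saturations. Measurable selection modulo null sets then gives a Borel map
into `D` on a non-null part of `C` with graph in `R`. Its fibres are countable, so the conditional
measures on them are atomic, and this produces a non-null set on which the map is injective,
contradicting the choice of `G`.
-/

theorem exists_forall_ge_apply_le {α β : Type*} [Preorder α] [Nonempty α] [LinearOrder β]
    [DenselyOrdered β] [TopologicalSpace β] [OrderTopology β] [TopologicalSpace.SeparableSpace β]
    {m : α → β} (hm : Monotone m) (hbdd : ∀ u : ℕ → α, Monotone u → BddAbove (Set.range u)) :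
    ∃ a, ∀ b ≥ a, m b ≤ m a := by
  have : Nonempty β := ‹Nonempty α›.map m
  let q := TopologicalSpace.denseSeq β
  have step (n : ℕ) (a : α) : ∃ a' ≥ a, (∃ b ≥ a, q n < m b) → q n < m a' := by
    by_cases h : ∃ b ≥ a, q n < m b
    · exact h.imp fun b hb ↦ ⟨hb.1, fun _ ↦ hb.2⟩
    · exact ⟨a, le_rfl, fun h' ↦ absurd h' h⟩
  -- At stage `n`, `m` passes the `n`-th point of a dense sequence of values if it still can.
  choose next le_next lt_next using step
  let u : ℕ → α := Nat.rec (Classical.arbitrary α) next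
  obtain ⟨a, ha⟩ := hbdd u (monotone_nat_of_le_succ fun n ↦ le_next n (u n))
  have hua (n : ℕ) : u n ≤ a := ha (Set.mem_range_self n)
  refine ⟨a, fun b hab ↦ le_of_not_gt fun hlt ↦ ?_⟩
  obtain ⟨n, haq, hqb⟩ :=
    (TopologicalSpace.denseRange_denseSeq β).exists_mem_open isOpen_Ioo (Set.nonempty_Ioo.2 hlt)
  have hqu : q n < m (u (n + 1)) := lt_next n (u n) ⟨b, (hua n).trans hab, hqb⟩
  exact (haq.trans (hqu.trans_le (hm (hua (n + 1))))).false

section MeasurableBranch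

variable {X : Type*} [MeasurableSpace X]

theorem exists_measurable_nat_forall_mem {S : Set X} {V : ℕ → Set X}
    (hV : ∀ n, MeasurableSet (V n)) (hS : S ⊆ ⋃ n, V n) :
    ∃ g : X → ℕ, Measurable g ∧ ∀ x ∈ S, x ∈ V (g x) := by
  classical
  have hex (x : X) : ∃ n, x ∈ V n ∪ (⋃ n, V n)ᶜ := by
    by_cases hx : x ∈ ⋃ n, V n
    · exact (Set.mem_iUnion.1 hx).imp fun _ ↦ Or.inl
    · exact ⟨0, Or.inr hx⟩
  refine ⟨fun x ↦ Nat.find (hex x),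
    measurable_find hex fun n ↦ (hV n).union (MeasurableSet.iUnion hV).compl, fun x hx ↦ ?_⟩
  exact (Nat.find_spec (hex x)).resolve_right (not_not_intro (hS hx))

theorem exists_measurable_forall_mem_res {H : List ℕ → Set X} (hH : ∀ w, MeasurableSet (H w))
    (hcover : ∀ w, H w ⊆ ⋃ n, H (n :: w)) :
    ∃ s : X → ℕ → ℕ, Measurable s ∧ ∀ x ∈ H [], ∀ k, x ∈ H (PiNat.res (s x) k) := by
  choose next measurable_next mem_next using
    fun w ↦ exists_measurable_nat_forall_mem (fun n ↦ hH (n :: w)) (hcover w)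
  let word (x : X) : ℕ → List ℕ := Nat.rec [] fun _ w ↦ next w x :: w
  let s (x : X) (k : ℕ) : ℕ := next (word x k) x
  have res_s (x : X) (k : ℕ) : PiNat.res (s x) k = word x k := by
    induction k with
    | zero => rfl
    | succ k ih => rw [PiNat.res_succ, ih]
  let _ : MeasurableSpace (List ℕ) := ⊤
  have measurable_digit {w : X → List ℕ} (hw : Measurable w) : Measurable fun x ↦ next (w x) x :=
    (measurable_from_prod_countable_left (f := fun p : X × List ℕ ↦ next p.2 p.1)
      measurable_next).comp (measurable_id.prodMk hw)
  have measurable_word (k : ℕ) : Measurable fun x ↦ word x k := by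
    induction k with
    | zero => exact measurable_const
    | succ k ih =>
      exact (measurable_of_countable fun p : ℕ × List ℕ ↦ p.1 :: p.2).comp
        ((measurable_digit ih).prodMk ih)
  refine ⟨s, measurable_pi_lambda _ fun k ↦ measurable_digit (measurable_word k), fun x hx k ↦ ?_⟩
  rw [res_s]
  induction k with
  | zero => exact hx
  | succ k ih => exact mem_next _ x ih

end MeasurableBranch

section CylinderImage

variable {X : Type*}

/-- The image under `h` of the cylinder of sequences with initial segment `w`, where `w` lists the
entries from the last to the first, as in `PiNat.res`. -/
def cylinderImage (h : (ℕ → ℕ) → X) (w : List ℕ) : Set X :=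
  h '' {z | PiNat.res z w.length = w}

theorem cylinderImage_subset_iUnion_cons (h : (ℕ → ℕ) → X) (w : List ℕ) :
    cylinderImage h w ⊆ ⋃ n, cylinderImage h (n :: w) := by
  rintro _ ⟨z, hz : PiNat.res z w.length = w, rfl⟩
  refine Set.mem_iUnion.2 ⟨z w.length, z, ?_, rfl⟩
  rw [Set.mem_ofPred_eq, List.length_cons, PiNat.res_succ, hz]

theorem cylinderImage_res (h : (ℕ → ℕ) → X) (z : ℕ → ℕ) (k : ℕ) :
    cylinderImage h (PiNat.res z k) = h '' PiNat.cylinder z k := by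
  rw [cylinderImage, PiNat.res_length, PiNat.cylinder_eq_res]

theorem eq_of_forall_mem_closure_cylinderImage [TopologicalSpace X] [T2Space X]
    {h : (ℕ → ℕ) → X} (hh : Continuous h) {z : ℕ → ℕ} {x : X}
    (hx : ∀ k, x ∈ closure (cylinderImage h (PiNat.res z k))) : h z = x := by
  by_contra hne
  obtain ⟨U, V, hU, hV, hzU, hxV, hUV⟩ := t2_separation hne
  obtain ⟨_, ⟨y, k, rfl⟩, hzy, hyU⟩ := (PiNat.isTopologicalBasis_cylinders fun _ ↦ ℕ).mem_nhds_iff.1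
    ((hU.preimage hh).mem_nhds hzU)
  rw [← PiNat.mem_cylinder_iff_eq.1 hzy] at hyU
  obtain ⟨v, hvV, hv⟩ := mem_closure_iff.1 (hx k) V hV hxV
  rw [cylinderImage_res] at hv
  exact Set.disjoint_left.1 hUV (Set.image_subset_iff.2 hyU hv) hvV

end CylinderImage

section MeasurableSelection

variable {X : Type*} [MeasurableSpace X] [TopologicalSpace X]

/-- A measurable superset of `cylinderImage h w` with the same outer measure, cut down to the
closure so that the hulls of the initial segments of a sequence `z` have no common point
but `h z`. -/
def cylinderHull (μ : Measure X) (h : (ℕ → ℕ) → X) (w : List ℕ) : Set X :=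
  toMeasurable μ (cylinderImage h w) ∩ closure (cylinderImage h w)

theorem cylinderImage_subset_cylinderHull (μ : Measure X) (h : (ℕ → ℕ) → X) (w : List ℕ) :
    cylinderImage h w ⊆ cylinderHull μ h w :=
  Set.subset_inter (subset_toMeasurable _ _) subset_closure

variable [OpensMeasurableSpace X]

theorem measurableSet_cylinderHull (μ : Measure X) (h : (ℕ → ℕ) → X) (w : List ℕ) :
    MeasurableSet (cylinderHull μ h w) :=
  (measurableSet_toMeasurable _ _).inter isClosed_closure.measurableSet

theorem measure_cylinderHull_sdiff_iUnion_cons (μ : Measure X) [SFinite μ] (h : (ℕ → ℕ) → X)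
    (w : List ℕ) : μ (cylinderHull μ h w \ ⋃ n, cylinderHull μ h (n :: w)) = 0 := by
  have hcover : cylinderImage h w ⊆ ⋃ n, cylinderHull μ h (n :: w) :=
    (cylinderImage_subset_iUnion_cons h w).trans
      (Set.iUnion_mono fun n ↦ cylinderImage_subset_cylinderHull μ h (n :: w))
  have hmeas : MeasurableSet (⋃ n, cylinderHull μ h (n :: w)) :=
    .iUnion fun n ↦ measurableSet_cylinderHull μ h (n :: w)
  refine measure_mono_null (Set.sdiff_subset_sdiff_left Set.inter_subset_left) ?_
  rw [Set.sdiff_eq, Measure.measure_toMeasurable_inter_of_sFinite hmeas.compl, ← Set.sdiff_eq,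
    Set.sdiff_eq_empty.2 hcover, measure_empty]

theorem exists_measurable_ae_rightInverse [T2Space X] (μ : Measure X) [SFinite μ]
    {h : (ℕ → ℕ) → X} (hh : Continuous h) :
    ∃ s : X → ℕ → ℕ, Measurable s ∧ ∀ᵐ x ∂μ, x ∈ Set.range h → h (s x) = x := by
  let H := cylinderHull μ h
  have hH (w : List ℕ) : MeasurableSet (H w) := measurableSet_cylinderHull μ h w
  let N : Set X := ⋃ w, H w \ ⋃ n, H (n :: w)
  have hN : MeasurableSet N := .iUnion fun w ↦ (hH w).diff (.iUnion fun n ↦ hH (n :: w))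
  have hcover (w : List ℕ) : H w \ N ⊆ ⋃ n, H (n :: w) \ N := by
    rintro x ⟨hxw, hxN⟩
    rw [← Set.iUnion_sdiff]
    exact ⟨by_contra fun hx ↦ hxN (Set.mem_iUnion.2 ⟨w, hxw, hx⟩), hxN⟩
  obtain ⟨s, hs, hbranch⟩ := exists_measurable_forall_mem_res (fun w ↦ (hH w).diff hN) hcover
  have hN_null : ∀ᵐ x ∂μ, x ∉ N :=
    measure_eq_zero_iff_ae_notMem.1 <| measure_iUnion_null fun w ↦
      measure_cylinderHull_sdiff_iUnion_cons μ h w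
  refine ⟨s, hs, ?_⟩
  filter_upwards [hN_null] with x hxN hx
  have hx_root : x ∈ H [] := by
    obtain ⟨z, rfl⟩ := hx
    exact cylinderImage_subset_cylinderHull μ h [] ⟨z, rfl, rfl⟩
  exact eq_of_forall_mem_closure_cylinderImage hh fun k ↦ (hbranch x ⟨hx_root, hxN⟩ k).1.2

end MeasurableSelection

theorem exists_measurable_ae_mem_of_mem_image_fst {X Y : Type*} [MeasurableSpace X]
    [StandardBorelSpace X] [MeasurableSpace Y] [StandardBorelSpace Y] [Nonempty Y] (μ : Measure X)
    [SFinite μ] {E : Set (X × Y)} (hE : MeasurableSet E) :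
    ∃ f : X → Y, Measurable f ∧ ∀ᵐ x ∂μ, x ∈ Prod.fst '' E → (x, f x) ∈ E := by
  let := upgradeStandardBorel X
  let := upgradeStandardBorel Y
  obtain rfl | ⟨g, hg, rfl⟩ : E = ∅ ∨ ∃ g : (ℕ → ℕ) → X × Y, Continuous g ∧ Set.range g = E := by
    simpa only [AnalyticSet] using hE.analyticSet
  · exact ⟨fun _ ↦ Classical.arbitrary Y, measurable_const, by simp⟩
  obtain ⟨s, hs, hsg⟩ := exists_measurable_ae_rightInverse μ (continuous_fst.comp hg)
  refine ⟨fun x ↦ (g (s x)).2, (measurable_snd.comp hg.measurable).comp hs, ?_⟩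
  filter_upwards [hsg] with x hx hxE
  rw [← Set.range_comp] at hxE
  exact ⟨s x, Prod.ext (hx hxE) rfl⟩

section CountableFibers

open ProbabilityTheory

variable {X Y : Type*} [MeasurableSpace X] [MeasurableSpace Y]

theorem measurable_kernel_singleton [MeasurableEq X] (κ : Kernel Y X) [IsSFiniteKernel κ] :
    Measurable fun p : Y × X ↦ κ p.1 {p.2} :=
  Kernel.measurable_kernel_prodMk_left (κ := κ.comap Prod.fst measurable_fst)
    (measurableSet_eq_fun measurable_snd (measurable_snd.comp measurable_fst))

theorem ae_compProd_kernel_singleton_ne_zero [MeasurableEq X] {ν : Measure Y} [SFinite ν]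
    {κ : Kernel Y X} [IsSFiniteKernel κ] {E : Set (Y × X)} (hE : ∀ᵐ p ∂(ν ⊗ₘ κ), p ∈ E)
    (hcount : ∀ y, {x | (y, x) ∈ E}.Countable) : ∀ᵐ p ∂(ν ⊗ₘ κ), κ p.1 {p.2} ≠ 0 := by
  have hmeas : MeasurableSet {p : Y × X | κ p.1 {p.2} ≠ 0} :=
    (measurable_kernel_singleton κ (measurableSet_singleton 0)).compl
  refine Measure.ae_compProd_of_ae_ae hmeas ?_
  filter_upwards [Measure.ae_ae_of_ae_compProd hE] with y hy
  have hnull : κ y {x | (y, x) ∈ E ∧ κ y {x} = 0} = 0 := by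
    rw [← Set.biUnion_of_singleton {x | (y, x) ∈ E ∧ κ y {x} = 0},
      measure_biUnion_null_iff ((hcount y).mono fun x hx ↦ hx.1)]
    exact fun x hx ↦ hx.2
  filter_upwards [hy, measure_eq_zero_iff_ae_notMem.1 hnull] with x hxE hx hx0
  exact hx ⟨hxE, hx0⟩

theorem eq_of_measure_lt_two_mul_singleton [MeasurableSingletonClass X] {ν : Measure X} {V : Set X}
    {x y : X} (hxV : x ∈ V) (hyV : y ∈ V) (hx : ν V < 2 * ν {x}) (hy : ν V < 2 * ν {y}) :
    x = y := by
  by_contra hne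
  have hle : ν {x} + ν {y} ≤ ν V := by
    rw [← measure_union (Set.disjoint_singleton.2 hne) (measurableSet_singleton y)]
    exact measure_mono (Set.union_subset (by simpa) (by simpa))
  have hlt : 2 * ν V < 2 * (ν {x} + ν {y}) := by
    rw [two_mul, mul_add]
    exact ENNReal.add_lt_add hx hy
  exact hlt.not_ge (by gcongr)

theorem exists_mem_countableBasis_measure_lt_two_mul_singleton [TopologicalSpace X]
    [SecondCountableTopology X] {ν : Measure X} [IsFiniteMeasure ν] [ν.OuterRegular] {x : X}
    (hx : ν {x} ≠ 0) :
    ∃ V ∈ TopologicalSpace.countableBasis X, x ∈ V ∧ ν V < 2 * ν {x} := by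
  have hlt : ν {x} < 2 * ν {x} := by
    rw [two_mul]
    exact ENNReal.lt_add_right (measure_ne_top _ _) hx
  obtain ⟨U, hxU, hU, hUlt⟩ := Set.exists_isOpen_lt_of_lt _ _ hlt
  obtain ⟨V, hV, hxV, hVU⟩ :=
    (TopologicalSpace.isBasis_countableBasis X).exists_subset_of_mem_open (hxU rfl) hU
  exact ⟨V, hV, hxV, (measure_mono hVU).trans_lt hUlt⟩

theorem ae_condDistrib_id_singleton_ne_zero [StandardBorelSpace X] [Nonempty X] [MeasurableEq Y]
    {μ : Measure X} [IsFiniteMeasure μ] {f : X → Y} (hf : Measurable f) {T : Set X}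
    (hT : MeasurableSet T) (hμT : ∀ᵐ x ∂μ, x ∈ T) (hcount : ∀ y, (T ∩ f ⁻¹' {y}).Countable) :
    ∀ᵐ x ∂μ, condDistrib id f μ (f x) {x} ≠ 0 := by
  have hdisint : μ.map f ⊗ₘ condDistrib id f μ = μ.map fun x ↦ (f x, x) :=
    compProd_map_condDistrib aemeasurable_id
  have hpair : Measurable fun x ↦ (f x, x) := hf.prodMk measurable_id
  let E : Set (Y × X) := {p | p.2 ∈ T ∧ f p.2 = p.1}
  have hE : MeasurableSet E :=
    (measurable_snd hT).inter (measurableSet_eq_fun (hf.comp measurable_snd) measurable_fst)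
  have hconc : ∀ᵐ p ∂(μ.map f ⊗ₘ condDistrib id f μ), p ∈ E := by
    rw [hdisint]
    refine (ae_map_iff hpair.aemeasurable hE).2 ?_
    filter_upwards [hμT] with x hx using ⟨hx, rfl⟩
  have hatom := ae_compProd_kernel_singleton_ne_zero hconc hcount
  rw [hdisint] at hatom
  exact ae_of_ae_map hpair.aemeasurable hatom

theorem exists_measurableSet_injOn_of_countable_fibers [StandardBorelSpace X] [MeasurableEq Y]
    {μ : Measure X} [IsFiniteMeasure μ] {f : X → Y} (hf : Measurable f) {T : Set X}
    (hT : MeasurableSet T) (hcount : ∀ y, (T ∩ f ⁻¹' {y}).Countable) (hpos : μ T ≠ 0) :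
    ∃ P ⊆ T, MeasurableSet P ∧ Set.InjOn f P ∧ μ P ≠ 0 := by
  let := upgradeStandardBorel X
  have : Nonempty X := (nonempty_of_measure_ne_zero hpos).to_type
  let κ := condDistrib id f (μ.restrict T)
  let P (V : Set X) : Set X := T ∩ (V ∩ {x | κ (f x) V < 2 * κ (f x) {x}})
  have hP {V : Set X} (hV : MeasurableSet V) : MeasurableSet (P V) :=
    hT.inter <| hV.inter <| measurableSet_lt ((κ.measurable_coe hV).comp hf)
      (((measurable_kernel_singleton κ).comp (hf.prodMk measurable_id)).const_mul 2)
  have hcover : ∀ᵐ x ∂μ, x ∈ T → x ∈ ⋃ V ∈ TopologicalSpace.countableBasis X, P V := by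
    have hatom : ∀ᵐ x ∂μ.restrict T, κ (f x) {x} ≠ 0 :=
      ae_condDistrib_id_singleton_ne_zero hf hT (ae_restrict_mem hT) hcount
    filter_upwards [(ae_restrict_iff' hT).1 hatom] with x hx hxT
    obtain ⟨V, hV, hxV, hlt⟩ := exists_mem_countableBasis_measure_lt_two_mul_singleton (hx hxT)
    exact Set.mem_biUnion hV ⟨hxT, hxV, hlt⟩
  obtain ⟨V, hV, hPV⟩ : ∃ V ∈ TopologicalSpace.countableBasis X, μ (P V) ≠ 0 := by
    by_contra! hnull
    exact hpos (measure_mono_null_ae hcover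
      ((measure_biUnion_null_iff (TopologicalSpace.countable_countableBasis X)).2 hnull))
  refine ⟨P V, Set.inter_subset_left,
    hP (TopologicalSpace.isOpen_of_mem_countableBasis hV).measurableSet, ?_, hPV⟩
  rintro x ⟨-, hxV, hx⟩ y ⟨-, hyV, hy⟩ hxy
  rw [Set.mem_ofPred_eq, ← hxy] at hy
  exact eq_of_measure_lt_two_mul_singleton hxV hyV hx hy

end CountableFibers

/-- A Borel matching in the bipartite graph `E` between `X` and `Y`: a Borel set `G` of edges, no
two of which share an endpoint. In standard Borel spaces these are the graphs of the Borel
bijections between Borel subsets of `X` and `Y`, the subsets being the two projections of `G`. -/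
structure IsBorelMatching {X Y : Type*} [MeasurableSpace X] [MeasurableSpace Y]
    (E G : Set (X × Y)) : Prop where
  measurableSet : MeasurableSet G
  subset : G ⊆ E
  injOn_fst : Set.InjOn Prod.fst G
  injOn_snd : Set.InjOn Prod.snd G

namespace IsBorelMatching

variable {X Y : Type*} [MeasurableSpace X] [MeasurableSpace Y] {E G K : Set (X × Y)}

theorem empty (E : Set (X × Y)) : IsBorelMatching E ∅ :=
  ⟨.empty, Set.empty_subset E, Set.injOn_empty _, Set.injOn_empty _⟩

theorem iUnion_of_monotone {G : ℕ → Set (X × Y)} (hmono : Monotone G)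
    (hG : ∀ n, IsBorelMatching E (G n)) : IsBorelMatching E (⋃ n, G n) where
  measurableSet := .iUnion fun n ↦ (hG n).measurableSet
  subset := Set.iUnion_subset fun n ↦ (hG n).subset
  injOn_fst := Set.inj_on_iUnion_of_directed hmono.directed_le fun n ↦ (hG n).injOn_fst
  injOn_snd := Set.inj_on_iUnion_of_directed hmono.directed_le fun n ↦ (hG n).injOn_snd

theorem union (hG : IsBorelMatching E G)
    (hK : IsBorelMatching (E ∩ (Prod.fst '' G)ᶜ ×ˢ (Prod.snd '' G)ᶜ) K) :
    IsBorelMatching E (G ∪ K) := by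
  have hfst : ∀ p ∈ G, ∀ q ∈ K, p.1 ≠ q.1 := fun p hp q hq h ↦ (hK.subset hq).2.1 ⟨p, hp, h⟩
  have hsnd : ∀ p ∈ G, ∀ q ∈ K, p.2 ≠ q.2 := fun p hp q hq h ↦ (hK.subset hq).2.2 ⟨p, hp, h⟩
  have hdisj : Disjoint G K := Set.disjoint_left.2 fun p hpG hpK ↦ hfst p hpG p hpK rfl
  exact ⟨hG.measurableSet.union hK.measurableSet,
    Set.union_subset hG.subset (hK.subset.trans Set.inter_subset_left),
    (Set.injOn_union hdisj).2 ⟨hG.injOn_fst, hK.injOn_fst, hfst⟩,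
    (Set.injOn_union hdisj).2 ⟨hG.injOn_snd, hK.injOn_snd, hsnd⟩⟩

variable [StandardBorelSpace X] [StandardBorelSpace Y]

theorem image_prodMk {f : X → Y} (hf : Measurable f) {P : Set X} (hP : MeasurableSet P)
    (hPE : ∀ x ∈ P, (x, f x) ∈ E) (hinj : Set.InjOn f P) :
    IsBorelMatching E ((fun x ↦ (x, f x)) '' P) where
  measurableSet := hP.image_of_measurable_injOn (measurable_id.prodMk hf)
    fun _ _ _ _ h ↦ congrArg Prod.fst h
  subset := Set.image_subset_iff.2 hPE
  injOn_fst := by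
    rintro _ ⟨x, -, rfl⟩ _ ⟨y, -, rfl⟩ rfl
    rfl
  injOn_snd := by
    rintro _ ⟨x, hx, rfl⟩ _ ⟨y, hy, rfl⟩ hxy
    rw [hinj hx hy hxy]

theorem measurableSet_image_fst (hG : IsBorelMatching E G) : MeasurableSet (Prod.fst '' G) :=
  hG.measurableSet.image_of_measurable_injOn measurable_fst hG.injOn_fst

theorem measurableSet_image_snd (hG : IsBorelMatching E G) : MeasurableSet (Prod.snd '' G) :=
  hG.measurableSet.image_of_measurable_injOn measurable_snd hG.injOn_snd

theorem exists_measurable_bijOn [Nonempty Y] (hG : IsBorelMatching E G) :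
    ∃ θ : X → Y, Measurable θ ∧ Set.BijOn θ (Prod.fst '' G) (Prod.snd '' G) ∧
      ∀ x ∈ Prod.fst '' G, (x, θ x) ∈ E := by
  have : StandardBorelSpace G := hG.measurableSet.standardBorel
  have hfst : MeasurableEmbedding fun p : G ↦ p.1.1 :=
    (measurable_fst.comp measurable_subtype_coe).measurableEmbedding hG.injOn_fst.injective
  obtain ⟨θ, hθ, hθG⟩ := hfst.exists_measurable_extend
    (measurable_snd.comp measurable_subtype_coe) fun _ ↦ ‹Nonempty Y›
  have hθ_eq : ∀ p ∈ G, θ p.1 = p.2 := fun p hp ↦ congrFun hθG ⟨p, hp⟩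
  refine ⟨θ, hθ, ⟨?_, ?_, ?_⟩, ?_⟩
  · rintro _ ⟨p, hp, rfl⟩
    exact ⟨p, hp, (hθ_eq p hp).symm⟩
  · rintro _ ⟨p, hp, rfl⟩ _ ⟨q, hq, rfl⟩ hpq
    rw [hθ_eq p hp, hθ_eq q hq] at hpq
    rw [hG.injOn_snd hp hq hpq]
  · rintro _ ⟨p, hp, rfl⟩
    exact ⟨p.1, ⟨p, hp, rfl⟩, hθ_eq p hp⟩
  · rintro _ ⟨p, hp, rfl⟩
    rw [hθ_eq p hp]
    exact hG.subset hp

end IsBorelMatching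

section ExistsMatching

variable {X Y : Type*} [MeasurableSpace X] [MeasurableSpace Y]

theorem exists_isBorelMatching_forall_superset_measure_le (μ : Measure X) (E : Set (X × Y)) :
    ∃ G, IsBorelMatching E G ∧
      ∀ G' ⊇ G, IsBorelMatching E G' → μ (Prod.fst '' G') ≤ μ (Prod.fst '' G) := by
  have : Nonempty {G // IsBorelMatching E G} := ⟨∅, .empty E⟩
  obtain ⟨⟨G, hG⟩, hmax⟩ := exists_forall_ge_apply_le
    (m := fun G : {G // IsBorelMatching E G} ↦ μ (Prod.fst '' G.1))
    (fun G G' h ↦ measure_mono (Set.image_mono h)) fun u hu ↦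
      ⟨⟨⋃ n, (u n).1, .iUnion_of_monotone hu fun n ↦ (u n).2⟩,
        Set.forall_mem_range.2 fun n ↦ Set.subset_iUnion (fun n ↦ (u n).1) n⟩
  exact ⟨G, hG, fun G' hGG' hG' ↦ hmax ⟨G', hG'⟩ hGG'⟩

variable [StandardBorelSpace X] [StandardBorelSpace Y] {E : Set (X × Y)}

theorem exists_isBorelMatching_measure_image_fst_ne_zero {μ : Measure X} [IsFiniteMeasure μ]
    (hE : MeasurableSet E) (hcount : ∀ y, {x | (x, y) ∈ E}.Countable)
    (hpos : μ (Prod.fst '' E) ≠ 0) :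
    ∃ G, IsBorelMatching E G ∧ μ (Prod.fst '' G) ≠ 0 := by
  have : Nonempty Y := (nonempty_of_measure_ne_zero hpos).of_image.to_type.map Prod.snd
  obtain ⟨f, hf, hfE⟩ := exists_measurable_ae_mem_of_mem_image_fst μ hE
  let T : Set X := {x | (x, f x) ∈ E}
  have hT : MeasurableSet T := (measurable_id.prodMk hf) hE
  have hT_count (y : Y) : (T ∩ f ⁻¹' {y}).Countable :=
    (hcount y).mono fun x ⟨hxE, hxy⟩ ↦ by simpa [T, Set.mem_singleton_iff.1 hxy] using hxE
  have hT_pos : μ T ≠ 0 := fun h ↦ hpos (measure_mono_null_ae hfE h)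
  obtain ⟨P, hPT, hP, hinj, hP_pos⟩ :=
    exists_measurableSet_injOn_of_countable_fibers hf hT hT_count hT_pos
  refine ⟨_, .image_prodMk hf hP hPT hinj, ?_⟩
  simpa only [Set.image_image, Set.image_id'] using hP_pos

theorem exists_isBorelMatching_measure_unmatched_eq_zero (μ : Measure X) [IsFiniteMeasure μ]
    (hE : MeasurableSet E) (hcount : ∀ y, {x | (x, y) ∈ E}.Countable) :
    ∃ G, IsBorelMatching E G ∧
      μ (Prod.fst '' (E ∩ (Prod.fst '' G)ᶜ ×ˢ (Prod.snd '' G)ᶜ)) = 0 := by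
  obtain ⟨G, hG, hmax⟩ := exists_isBorelMatching_forall_superset_measure_le μ E
  refine ⟨G, hG, by_contra fun hpos ↦ ?_⟩
  obtain ⟨K, hK, hK_pos⟩ := exists_isBorelMatching_measure_image_fst_ne_zero
    (hE.inter (hG.measurableSet_image_fst.compl.prod hG.measurableSet_image_snd.compl))
    (fun y ↦ (hcount y).mono fun x hx ↦ hx.1) hpos
  have hdisj : Disjoint (Prod.fst '' G) (Prod.fst '' K) :=
    Set.disjoint_right.2 (Set.forall_mem_image.2 fun _ hp ↦ (hK.subset hp).2.1)
  have hle := hmax (G ∪ K) Set.subset_union_left (hG.union hK)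
  rw [Set.image_union, measure_union hdisj hK.measurableSet_image_fst] at hle
  exact (ENNReal.lt_add_right (measure_ne_top _ _) hK_pos).not_ge hle

end ExistsMatching

section InvariantSeparation

theorem measurablySeparable_setRel_image {X Y : Type*} [MeasurableSpace X] [StandardBorelSpace X]
    [MeasurableSpace Y] [StandardBorelSpace Y] {R : SetRel X Y} (hR : MeasurableSet R)
    {S T : Set X} (hS : MeasurableSet S) (hT : MeasurableSet T)
    (hST : Disjoint (R.image S) (R.image T)) : MeasurablySeparable (R.image S) (R.image T) := by
  let := upgradeStandardBorel X
  let := upgradeStandardBorel Y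
  have analyticSet_image {U : Set X} (hU : MeasurableSet U) : AnalyticSet (R.image U) := by
    have himage : R.image U = Prod.snd '' (R ∩ Prod.fst ⁻¹' U) := by
      ext y
      simp [and_comm]
    rw [himage]
    exact (hR.inter (measurable_fst hU)).analyticSet.image_of_continuous continuous_snd
  exact (analyticSet_image hS).measurablySeparable (analyticSet_image hT) hST

variable {X : Type*} [MeasurableSpace X] [StandardBorelSpace X] {R : SetRel X X} {C D : Set X}

theorem exists_measurableSet_image_subset_disjoint_image (hR : MeasurableSet R)
    (hR_equiv : Equivalence fun x y ↦ (x, y) ∈ R) (hC : MeasurableSet C) (hD : MeasurableSet D)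
    (hCD : Disjoint (R.image C) D) :
    ∃ D', MeasurableSet D' ∧ R.image D ⊆ D' ∧ Disjoint (R.image C) D' := by
  have hdisj : Disjoint (R.image D) (R.image C) := by
    refine Set.disjoint_left.2 ?_
    rintro z ⟨y, hy, hyz⟩ ⟨x, hx, hxz⟩
    exact Set.disjoint_left.1 hCD ⟨x, hx, hR_equiv.trans hxz (hR_equiv.symm hyz)⟩ hy
  obtain ⟨D', hDD', hCD', hD'⟩ := measurablySeparable_setRel_image hR hD hC hdisj
  exact ⟨D', hD', hDD', hCD'⟩

theorem exists_invariant_measurableSet_superset_disjoint (hR : MeasurableSet R)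
    (hR_equiv : Equivalence fun x y ↦ (x, y) ∈ R) (hC : MeasurableSet C) (hD : MeasurableSet D)
    (hCD : Disjoint (R.image C) D) :
    ∃ I, MeasurableSet I ∧ (∀ x y, (x, y) ∈ R → (x ∈ I ↔ y ∈ I)) ∧ D ⊆ I ∧ Disjoint C I := by
  have step (S : {S : Set X // MeasurableSet S ∧ Disjoint (R.image C) S}) :
      ∃ S' : {S : Set X // MeasurableSet S ∧ Disjoint (R.image C) S}, R.image S.1 ⊆ S'.1 := by
    obtain ⟨S', hS', hSS', hCS'⟩ :=
      exists_measurableSet_image_subset_disjoint_image hR hR_equiv hC S.2.1 S.2.2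
    exact ⟨⟨S', hS', hCS'⟩, hSS'⟩
  choose next image_subset_next using step
  let S (n : ℕ) := next^[n] ⟨D, hD, hCD⟩
  have image_subset_succ (n : ℕ) : R.image (S n).1 ⊆ (S (n + 1)).1 := by
    simpa only [S, Function.iterate_succ_apply'] using image_subset_next (S n)
  let I : Set X := ⋃ n, (S n).1
  have hI_image {x y : X} (hxy : (x, y) ∈ R) (hx : x ∈ I) : y ∈ I := by
    obtain ⟨n, hn⟩ := Set.mem_iUnion.1 hx
    exact Set.mem_iUnion.2 ⟨n + 1, image_subset_succ n ⟨x, hn, hxy⟩⟩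
  have hC_image : C ⊆ R.image C := fun x hx ↦ ⟨x, hx, hR_equiv.refl x⟩
  have hCI : Disjoint (R.image C) I := Set.disjoint_iUnion_right.2 fun n ↦ (S n).2.2
  exact ⟨I, .iUnion fun n ↦ (S n).2.1,
    fun x y hxy ↦ ⟨hI_image hxy, hI_image (hR_equiv.symm hxy)⟩,
    Set.subset_iUnion (fun n ↦ (S n).1) 0, hCI.mono_left hC_image⟩

theorem measure_eq_zero_or_of_measure_image_fst_inter_prod_eq_zero {μ : Measure X}
    (hR : MeasurableSet R) (hR_equiv : Equivalence fun x y ↦ (x, y) ∈ R)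
    (hR_erg : ∀ I, MeasurableSet I → (∀ x y, (x, y) ∈ R → (x ∈ I ↔ y ∈ I)) → μ I = 0 ∨ μ Iᶜ = 0)
    (hC : MeasurableSet C) (hD : MeasurableSet D)
    (hnull : μ (Prod.fst '' (R ∩ C ×ˢ D)) = 0) : μ C = 0 ∨ μ D = 0 := by
  let N := toMeasurable μ (Prod.fst '' (R ∩ C ×ˢ D))
  have hN : μ N = 0 := by rwa [measure_toMeasurable]
  have hdisj : Disjoint (R.image (C \ N)) D := by
    refine Set.disjoint_left.2 ?_
    rintro y ⟨x, ⟨hxC, hxN⟩, hxy⟩ hyD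
    exact hxN (subset_toMeasurable _ _ ⟨(x, y), ⟨hxy, hxC, hyD⟩, rfl⟩)
  obtain ⟨I, hI, hI_inv, hDI, hCI⟩ := exists_invariant_measurableSet_superset_disjoint hR hR_equiv
    (hC.diff (measurableSet_toMeasurable _ _)) hD hdisj
  refine (hR_erg I hI hI_inv).symm.imp (fun hI_null ↦ ?_) (measure_mono_null hDI)
  refine measure_mono_null ?_ (measure_union_null hN hI_null)
  rw [← Set.sdiff_subset_iff]
  exact hCI.subset_compl_right

end InvariantSeparation

/-- Let `R` be an ergodic measure-preserving countable Borel equivalence relation on a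
standard probability space `(X, μ)`, and let `A`, `B` be Borel sets with
`μ(A) = μ(B) > 0`.  Then, after discarding a null set, there is a Borel bijection
from `A` to `B` whose graph is contained in `R`. -/
theorem exists_partial_bijection_of_ergodic
    {X : Type*} [MeasurableSpace X] [StandardBorelSpace X]
    (μ : Measure X) [IsProbabilityMeasure μ]
    (R : Set (X × X))
    (hR_meas : MeasurableSet R)
    (hR_equiv : Equivalence (fun x y : X => (x, y) ∈ R))
    (hR_count : ∀ x : X, {y : X | (x, y) ∈ R}.Countable)
    (hR_pmp : ∀ (A' B' : Set X) (f : X → X), MeasurableSet A' → MeasurableSet B' →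
      Measurable f → Set.BijOn f A' B' → (∀ x ∈ A', (x, f x) ∈ R) → μ A' = μ B')
    (hR_erg : ∀ A' : Set X, MeasurableSet A' →
      (∀ x y : X, (x, y) ∈ R → (x ∈ A' ↔ y ∈ A')) → μ A' = 0 ∨ μ A' = 1)
    (A B : Set X) (hA : MeasurableSet A) (hB : MeasurableSet B)
    (hAB : μ A = μ B) (hApos : 0 < μ A) :
    ∃ (A' B' : Set X) (θ : X → X),
      MeasurableSet A' ∧ MeasurableSet B' ∧ A' ⊆ A ∧ B' ⊆ B ∧
      μ (A \ A') = 0 ∧ μ (B \ B') = 0 ∧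
      Measurable θ ∧ Set.BijOn θ A' B' ∧ ∀ x ∈ A', (x, θ x) ∈ R := by
  obtain ⟨G, hG, hG_max⟩ := exists_isBorelMatching_measure_unmatched_eq_zero μ
    (E := R ∩ A ×ˢ B) (hR_meas.inter (hA.prod hB))
    fun y ↦ (hR_count y).mono fun x hx ↦ hR_equiv.symm hx.1
  have hA' := hG.measurableSet_image_fst
  have hB' := hG.measurableSet_image_snd
  have hA'A : Prod.fst '' G ⊆ A := Set.image_subset_iff.2 fun p hp ↦ (hG.subset hp).2.1
  have hB'B : Prod.snd '' G ⊆ B := Set.image_subset_iff.2 fun p hp ↦ (hG.subset hp).2.2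
  have : Nonempty X := μ.nonempty_of_neZero
  obtain ⟨θ, hθ, hθ_bij, hθE⟩ := hG.exists_measurable_bijOn
  have hθR : ∀ x ∈ Prod.fst '' G, (x, θ x) ∈ R := fun x hx ↦ (hθE x hx).1
  have hrest : μ (A \ Prod.fst '' G) = μ (B \ Prod.snd '' G) := by
    rw [measure_sdiff hA'A hA'.nullMeasurableSet (measure_ne_top _ _),
      measure_sdiff hB'B hB'.nullMeasurableSet (measure_ne_top _ _), hAB,
      hR_pmp _ _ θ hA' hB' hθ hθ_bij hθR]
  have hrest_null : μ (A \ Prod.fst '' G) = 0 ∨ μ (B \ Prod.snd '' G) = 0 := by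
    refine measure_eq_zero_or_of_measure_image_fst_inter_prod_eq_zero hR_meas hR_equiv
      (fun I hI hI_inv ↦ (hR_erg I hI hI_inv).imp_right (prob_compl_eq_zero_iff hI).2)
      (hA.diff hA') (hB.diff hB') (measure_mono_null (Set.image_mono ?_) hG_max)
    exact fun p hp ↦ ⟨⟨hp.1, hp.2.1.1, hp.2.2.1⟩, hp.2.1.2, hp.2.2.2⟩
  rw [← hrest, or_self] at hrest_null
  exact ⟨_, _, θ, hA', hB', hA'A, hB'B, hrest_null, hrest ▸ hrest_null, hθ, hθ_bij, hθR⟩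
end
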